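/- arXiv:2012.10864 — 2 statements merged into one kernel-verified Lean document; each statement's English description precedes it below -/
import Mathlib

section
/- Post–Widder convergence of Grünwald-type coefficients: under (H0), for every δ > 0, every i ∈ {−1, 0, 1} and every fixed integer j ≥ 0, the functions x ↦ (m/(x+1)) · G^{k_i}_{m−j, (x+1)/m} converge uniformly on [−1+δ, 1] to k_i⁺(x) as the integer m → ∞. -/
open MeasureTheory Set Filter Topology
noncomputable section

/-- The tail `φ((y, ∞))` of the Lévy measure `φ`. -/
def levyTail (φ : Measure ℝ) (y : ℝ) : ℝ := (φ (Ioi y)).toReal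

/-- The function `Φ(x) = ∫_x^∞ φ((y,∞)) dy` for `x > 0`, and `0` for `x ≤ 0`. -/
def PhiFn (φ : Measure ℝ) (x : ℝ) : ℝ :=
  if 0 < x then ∫ y in Ioi x, levyTail φ y else 0

/-- The Laplace exponent `ψ(ξ) = ξ² ∫_0^∞ e^{-ξ x} Φ(x) dx`. -/
def psiFn (φ : Measure ℝ) (ξ : ℂ) : ℂ :=
  ξ ^ 2 * ∫ x in Ioi (0 : ℝ), Complex.exp (-ξ * (x : ℂ)) * (PhiFn φ x : ℂ)

/-- Assumption (H0): `φ` is a nonnegative Borel measure on `(0,∞)` with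
`∫ (z² ∧ z) φ(dz) < ∞` and `∫_{(0,1)} z φ(dz) = ∞`. -/
def H0 (φ : Measure ℝ) : Prop :=
  φ (Iic 0) = 0 ∧
  (∫⁻ z in Ioi (0 : ℝ), ENNReal.ofReal (min (z ^ 2) z) ∂φ) < ⊤ ∧
  (∫⁻ z in Ioo (0 : ℝ) 1, ENNReal.ofReal z ∂φ) = ⊤

/-- Grünwald-type coefficients `G^ψ_{j,h} = ((-1)^j/(j! h^j)) ψ^{(j)}(1/h)`. -/
def grunPsi (φ : Measure ℝ) (j : ℕ) (h : ℝ) : ℝ :=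
  (((-1 : ℂ) ^ j / ((Nat.factorial j : ℂ) * (h : ℂ) ^ j)) *
    iteratedDeriv j (psiFn φ) ((1 : ℂ) / (h : ℂ))).re

/-- Grünwald-type coefficients of order `ψ - 1`:
`G^{ψ-1}_{j,h} = ((-1)^j/(j! h^j)) (d^j/dξ^j)(ψ(ξ)/ξ)|_{ξ=1/h}`. -/
def grunPsiM1 (φ : Measure ℝ) (j : ℕ) (h : ℝ) : ℝ :=
  (((-1 : ℂ) ^ j / ((Nat.factorial j : ℂ) * (h : ℂ) ^ j)) *
    iteratedDeriv j (fun ξ : ℂ => psiFn φ ξ / ξ) ((1 : ℂ) / (h : ℂ))).re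

/-- Grünwald-type coefficients for the scale functions:
`G^{k_i}_{j,h} = ((-1)^j/(j! h^j)) (d^j/dξ^j)(ξ^{-i}/ψ(ξ))|_{ξ=1/h}` for `i ∈ {1,0,-1,-2}`. -/
def grunK (φ : Measure ℝ) (i : ℤ) (j : ℕ) (h : ℝ) : ℝ :=
  (((-1 : ℂ) ^ j / ((Nat.factorial j : ℂ) * (h : ℂ) ^ j)) *
    iteratedDeriv j (fun ξ : ℂ => ξ ^ (-i) / psiFn φ ξ) ((1 : ℂ) / (h : ℂ))).re

/-- The defining properties of the scale kernel `k₋₁⁺` (extension by zero to `(-∞,-1)`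
of the scale function `k₋₁` of Lemma 3.1): nonnegative on `[-1,∞)`, continuous on
`(-1,∞)`, locally integrable, of sub-exponential growth, with Laplace transform
`∫_0^∞ e^{-ξ y} k₋₁(y-1) dy = ξ/ψ(ξ)` on `{Re ξ > 0}`. -/
def IsScaleKernel (φ : Measure ℝ) (k : ℝ → ℝ) : Prop :=
  (∀ x : ℝ, x < -1 → k x = 0) ∧
  (∀ x : ℝ, -1 ≤ x → 0 ≤ k x) ∧
  ContinuousOn k (Ioi (-1)) ∧
  LocallyIntegrableOn k (Ici (-1)) ∧
  (∀ ε : ℝ, 0 < ε → Tendsto (fun x : ℝ => Real.exp (-ε * x) * k x) atTop (nhds 0)) ∧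
  ∀ ξ : ℂ, 0 < ξ.re →
    IntegrableOn (fun y : ℝ => Complex.exp (-ξ * (y : ℂ)) * (k (y - 1) : ℂ)) (Ioi 0) ∧
    (∫ y in Ioi (0 : ℝ), Complex.exp (-ξ * (y : ℂ)) * (k (y - 1) : ℂ)) = ξ / psiFn φ ξ

/-- Iterated antiderivatives: `kIter k 0 = k₋₁⁺` and `kIter k (n+1) = I₊ (kIter k n)`,
so that `kₙ⁺ = kIter k (n+1)` for `n ≥ -1`. -/
def kIter (k : ℝ → ℝ) : ℕ → ℝ → ℝ
  | 0 => k
  | m + 1 => fun x => ∫ y in Iic x, kIter k m y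

/-- The coefficients `G^{k_i}_{l,h}` indexed by an integer `l`, set to `0` for `l < 0`. -/
def grunKZ (φ : Measure ℝ) (i : ℤ) (l : ℤ) (h : ℝ) : ℝ :=
  if l < 0 then 0 else grunK φ i l.toNat h

/-!
Differentiating a Laplace transform `F` of `g` under the integral sign writes the coefficient
`(m/t) * G_{m-j,t/m}` of `F` as the mean of `g` against the Gamma density of shape `m - j + 1` and
rate `m/t`. These densities concentrate at `t`, so the means tend to `g t` by continuity. As `g` is
only exponentially bounded in the mean, concentration is needed for `e^{by}` times the density;
exponential tilting turns this product into a bounded multiple of a Gamma density of rate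
`m/t - b`, which concentrates at the same point. Proving the limit along the filter
`atTop ×ˢ 𝓝 t`, where the target moves together with `m`, makes it locally uniform in `t`. Finally,
taking antiderivatives of `g` divides `F` by `ξ`, which covers all the kernels `kₙ⁺`.
-/

open ProbabilityTheory

section GammaDensity

theorem gammaPDFReal_natCast_add_one (n : ℕ) (s : ℝ) {y : ℝ} (hy : 0 ≤ y) :
    gammaPDFReal (n + 1) s y = s ^ (n + 1) / n.factorial * y ^ n * Real.exp (-(s * y)) := by
  rw [gammaPDFReal, if_pos hy, Real.Gamma_nat_eq_factorial, add_sub_cancel_right,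
    Real.rpow_natCast, ← Nat.cast_succ, Real.rpow_natCast]

theorem setIntegral_Ioi_gammaPDFReal {a r : ℝ} (ha : 0 < a) (hr : 0 < r) :
    ∫ y in Ioi 0, gammaPDFReal a r y = 1 := by
  have hsupp : ∀ y ∉ Ici (0 : ℝ), gammaPDFReal a r y = 0 := fun y hy => if_neg hy
  rw [← integral_Ici_eq_integral_Ioi, setIntegral_eq_integral_of_forall_compl_eq_zero hsupp,
    integral_eq_lintegral_of_nonneg_ae (ae_of_all _ (gammaPDFReal_nonneg ha hr))
      (measurable_gammaPDFReal a r).aestronglyMeasurable]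
  exact congrArg ENNReal.toReal (lintegral_gammaPDF_eq_one ha hr)

theorem exp_mul_mul_gammaPDFReal (a : ℝ) {b r : ℝ} (hr : 0 ≤ r) (hbr : b < r) (y : ℝ) :
    Real.exp (b * y) * gammaPDFReal a r y = (r / (r - b)) ^ a * gammaPDFReal a (r - b) y := by
  have hrb : 0 < r - b := sub_pos.2 hbr
  have hexp : Real.exp (-((r - b) * y)) = Real.exp (b * y) * Real.exp (-(r * y)) := by
    rw [← Real.exp_add]; ring_nf
  have hpow : (r - b) ^ a ≠ 0 := (Real.rpow_pos_of_pos hrb a).ne'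
  unfold gammaPDFReal
  split_ifs
  · rw [hexp, Real.div_rpow hr hrb.le]
    field_simp
  · simp only [mul_zero]

theorem mul_exp_one_sub_le {η u : ℝ} (hη : 0 ≤ η) (hu : 0 ≤ u) (hηu : η ≤ |u - 1|) :
    u * Real.exp (1 - u) ≤ 1 - (η / (2 + η)) ^ 2 := by
  have hexp : ((u + 1) / 2) ^ 2 ≤ Real.exp (u - 1) := by
    calc ((u + 1) / 2) ^ 2 ≤ Real.exp ((u - 1) / 2) ^ 2 :=
          pow_le_pow_left₀ (by linarith) (by linarith [Real.add_one_le_exp ((u - 1) / 2)]) 2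
      _ = Real.exp (u - 1) := by rw [← Real.exp_nat_mul]; push_cast; ring_nf
  have hratio : η / (2 + η) ≤ |u - 1| / (u + 1) := by
    rw [div_le_div_iff₀ (by positivity) (by positivity)]
    nlinarith [le_abs_self (u - 1)]
  calc u * Real.exp (1 - u) = u / Real.exp (u - 1) := by
        rw [← neg_sub u 1, Real.exp_neg, div_eq_mul_inv]
    _ ≤ u / ((u + 1) / 2) ^ 2 := by gcongr
    _ = 1 - (|u - 1| / (u + 1)) ^ 2 := by
        rw [div_pow |u - 1|, sq_abs]; field_simp; ring
    _ ≤ 1 - (η / (2 + η)) ^ 2 := by gcongr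

theorem gammaPDFReal_natCast_add_one_le {n : ℕ} (hn : 0 < n) {s y η : ℝ} (hs : 0 < s)
    (hy : 0 ≤ y) (hη : 0 ≤ η) (hηy : η ≤ |y / (n / s) - 1|) :
    gammaPDFReal (n + 1) s y ≤ s * (1 - (η / (2 + η)) ^ 2) ^ n := by
  have hn' : (0 : ℝ) < n := by exact_mod_cast hn
  set u := y / (n / s) with hu
  have hsy : s * y = n * u := by rw [hu]; field_simp
  have hsy_pow : s ^ n * y ^ n = n ^ n * u ^ n := by rw [← mul_pow, hsy, mul_pow]
  have hu0 : 0 ≤ u := by positivity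
  calc gammaPDFReal (n + 1) s y
      = s * ((n : ℝ) ^ n / n.factorial) * u ^ n * Real.exp (-(n * u)) := by
        rw [gammaPDFReal_natCast_add_one n s hy, pow_succ', hsy]
        linear_combination (s * Real.exp (-(n * u)) / n.factorial) * hsy_pow
    _ ≤ s * Real.exp n * u ^ n * Real.exp (-(n * u)) := by
        gcongr
        exact Real.pow_div_factorial_le_exp n hn'.le n
    _ = s * (u * Real.exp (1 - u)) ^ n := by
        rw [mul_pow, ← Real.exp_nat_mul, mul_one_sub, sub_eq_add_neg, Real.exp_add]
        ring
    _ ≤ s * (1 - (η / (2 + η)) ^ 2) ^ n := by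
        gcongr
        exact mul_exp_one_sub_le hη hu0 hηy

theorem div_four_mul_le_abs_div_sub_one {t τ y ε : ℝ} (hτ : 0 < τ) (hτt : τ ≤ 2 * t)
    (hclose : |τ - t| ≤ ε / 2) (hfar : ε ≤ |y - t|) : ε / (4 * t) ≤ |y / τ - 1| := by
  have hyτ : ε / 2 ≤ |y - τ| := by linarith [abs_sub_le y τ t]
  calc ε / (4 * t) = ε / 2 / (2 * t) := by rw [div_div]; ring_nf
    _ ≤ |y - τ| / τ := by gcongr
    _ = |y / τ - 1| := by rw [div_sub_one hτ.ne', abs_div, abs_of_pos hτ]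

/-- The measure `e^{-by} dy`. Against it, Laplace-integrability of a function on `(0, ∞)` is plain
integrability, and `(0, ∞)` has finite mass when `b > 0`. -/
def expDecayMeasure (b : ℝ) : Measure ℝ :=
  volume.withDensity fun y => ENNReal.ofReal (Real.exp (-b * y))

theorem expDecayMeasure_Ioi_lt_top {b : ℝ} (hb : 0 < b) (c : ℝ) :
    expDecayMeasure b (Ioi c) < ⊤ := by
  rw [expDecayMeasure, withDensity_apply _ measurableSet_Ioi]
  exact (integrableOn_exp_mul_Ioi (neg_lt_zero.2 hb) c).lintegral_lt_top

theorem integrableOn_expDecayMeasure_iff {E : Type*} [NormedAddCommGroup E] [NormedSpace ℝ E]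
    (b : ℝ) {g : ℝ → E} {S : Set ℝ} (hS : MeasurableSet S) :
    IntegrableOn g S (expDecayMeasure b) ↔
      IntegrableOn (fun y => Real.exp (-b * y) • g y) S := by
  rw [expDecayMeasure, IntegrableOn, restrict_withDensity hS,
    integrable_withDensity_iff_integrable_smul' (by fun_prop)
      (ae_of_all _ fun _ => ENNReal.ofReal_lt_top)]
  simp only [ENNReal.toReal_ofReal (Real.exp_pos _).le, IntegrableOn]

theorem setIntegral_expDecayMeasure {E : Type*} [NormedAddCommGroup E] [NormedSpace ℝ E]
    (b : ℝ) (p : ℝ → ℝ) (g : ℝ → E) {S : Set ℝ} (hS : MeasurableSet S) :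
    ∫ y in S, (Real.exp (b * y) * p y) • g y ∂expDecayMeasure b = ∫ y in S, p y • g y := by
  have hcancel (y : ℝ) : Real.exp (-b * y) * (Real.exp (b * y) * p y) = p y := by
    rw [← mul_assoc, ← Real.exp_add, neg_mul, neg_add_cancel, Real.exp_zero, one_mul]
  rw [expDecayMeasure, setIntegral_withDensity_eq_setIntegral_toReal_smul (by fun_prop)
    (ae_of_all _ fun _ => ENNReal.ofReal_lt_top) _ hS]
  simp only [ENNReal.toReal_ofReal (Real.exp_pos _).le, smul_smul, hcancel]

variable {ι : Type*} {l : Filter ι} {n : ι → ℕ} {s : ι → ℝ} {t : ℝ}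

theorem tendsto_atTop_of_tendsto_natCast_div (hn : Tendsto n l atTop)
    (hs : Tendsto (fun i => n i / s i) l (𝓝 t)) (ht : 0 < t) : Tendsto s l atTop := by
  have hn' : Tendsto (fun i => (n i : ℝ)) l atTop := tendsto_natCast_atTop_atTop.comp hn
  refine (hn'.atTop_mul_pos (inv_pos.2 ht) (hs.inv₀ ht.ne')).congr' ?_
  filter_upwards [hn.eventually_gt_atTop 0] with i hi
  have : (n i : ℝ) ≠ 0 := by positivity
  rw [inv_div]
  field_simp

theorem tendsto_natCast_div_sub (hn : Tendsto n l atTop)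
    (hs : Tendsto (fun i => n i / s i) l (𝓝 t)) (ht : 0 < t) (b : ℝ) :
    Tendsto (fun i => n i / (s i - b)) l (𝓝 t) := by
  have hs' := tendsto_atTop_of_tendsto_natCast_div hn hs ht
  have hb : Tendsto (fun i => 1 - b / s i) l (𝓝 1) := by
    simpa only [sub_zero] using (tendsto_const_nhds (x := (1 : ℝ))).sub (hs'.const_div_atTop b)
  have hlim := hs.div hb one_ne_zero
  rw [div_one] at hlim
  refine hlim.congr' ?_
  filter_upwards [hs'.eventually_gt_atTop 0] with i hi
  rw [Pi.div_apply, div_div, mul_one_sub, mul_div_cancel₀ b hi.ne']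

theorem tendsto_natCast_sub_div_natCast_div {m : ι → ℕ} {τ : ι → ℝ} (j : ℕ)
    (hm : Tendsto m l atTop) (hτ : Tendsto τ l (𝓝 t)) :
    Tendsto (fun i => ((m i - j : ℕ) : ℝ) / (m i / τ i)) l (𝓝 t) := by
  have hj : Tendsto (fun i => 1 - j / (m i : ℝ)) l (𝓝 (1 - 0)) :=
    ((tendsto_const_div_atTop_nhds_zero_nat (j : ℝ)).comp hm).const_sub 1
  have hmul := hτ.mul hj
  rw [sub_zero, mul_one] at hmul
  refine hmul.congr' ?_
  filter_upwards [hm.eventually_ge_atTop j, hm.eventually_gt_atTop 0] with i hji h0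
  rw [Nat.cast_sub hji]
  field_simp

theorem tendstoUniformlyOn_gammaPDFReal (hn : Tendsto n l atTop)
    (hs : Tendsto (fun i => n i / s i) l (𝓝 t)) (ht : 0 < t) {u : Set ℝ} (hu : u ∈ 𝓝 t) :
    TendstoUniformlyOn (fun i => gammaPDFReal (n i + 1) (s i)) 0 l (Ioi 0 \ u) := by
  obtain ⟨ε, hε, hεu⟩ := Metric.mem_nhds_iff.1 hu
  set η := ε / (4 * t)
  have hη : 0 < η := by positivity
  set q := 1 - (η / (2 + η)) ^ 2
  have hηlt : η / (2 + η) < 1 := (div_lt_one (by positivity)).2 (by linarith)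
  have hq0 : 0 ≤ q := sub_nonneg.2 (pow_le_one₀ (by positivity) hηlt.le)
  have hq1 : q < 1 := sub_lt_self 1 (by positivity)
  have hdecay : Tendsto (fun i => 2 / t * (n i * q ^ n i)) l (𝓝 (2 / t * 0)) :=
    ((tendsto_self_mul_const_pow_of_lt_one hq0 hq1).comp hn).const_mul (2 / t)
  rw [mul_zero] at hdecay
  rw [Metric.tendstoUniformlyOn_iff]
  intro κ hκ
  filter_upwards [hn.eventually_gt_atTop 0, hdecay.eventually_lt_const hκ,
    (tendsto_atTop_of_tendsto_natCast_div hn hs ht).eventually_gt_atTop 0,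
    hs.eventually_const_lt (half_lt_self ht), hs.eventually_lt_const (by linarith : t < 2 * t),
    hs.eventually (Metric.ball_mem_nhds t (half_pos hε))]
    with i hni hκi hsi hlow hup hclose y ⟨hy, hyu⟩
  have hyt : ε ≤ |y - t| := not_lt.1 fun hlt => hyu (hεu hlt)
  have hfar : η ≤ |y / (n i / s i) - 1| :=
    div_four_mul_le_abs_div_sub_one (by positivity) hup.le (le_of_lt hclose) hyt
  have hrate : s i ≤ 2 / t * n i := by
    rw [lt_div_iff₀ hsi] at hlow
    rw [div_mul_eq_mul_div, le_div_iff₀ ht]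
    linarith
  rw [Pi.zero_apply, dist_zero_left,
    Real.norm_of_nonneg (gammaPDFReal_nonneg (by positivity) hsi y)]
  calc gammaPDFReal (n i + 1) (s i) y ≤ s i * q ^ n i :=
        gammaPDFReal_natCast_add_one_le hni hsi (le_of_lt hy) hη.le hfar
    _ ≤ 2 / t * n i * q ^ n i := by gcongr
    _ < κ := by rwa [mul_assoc]

theorem exists_eventually_div_sub_rpow_le (hn : Tendsto n l atTop)
    (hs : Tendsto (fun i => n i / s i) l (𝓝 t)) (ht : 0 < t) (b : ℝ) :
    ∃ C, ∀ᶠ i in l, (s i / (s i - b)) ^ (n i + 1 : ℝ) ≤ C := by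
  have hs' := tendsto_atTop_of_tendsto_natCast_div hn hs ht
  have hlim : Tendsto (fun i => b * (n i / (s i - b) + 1 / (s i - b))) l (𝓝 (b * (t + 0))) :=
    ((tendsto_natCast_div_sub hn hs ht b).add
      ((tendsto_atTop_add_const_right l (-b) hs').const_div_atTop 1)).const_mul b
  refine ⟨Real.exp (b * (t + 0) + 1), ?_⟩
  filter_upwards [hs'.eventually_gt_atTop b, hs'.eventually_gt_atTop 0,
    hlim.eventually_lt_const (lt_add_one _)] with i hb h0 hi
  have : 0 < s i - b := sub_pos.2 hb
  calc (s i / (s i - b)) ^ (n i + 1 : ℝ) ≤ Real.exp (b / (s i - b)) ^ (n i + 1 : ℝ) := by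
        gcongr
        calc s i / (s i - b) = b / (s i - b) + 1 := by field_simp; ring
          _ ≤ Real.exp (b / (s i - b)) := Real.add_one_le_exp _
    _ = Real.exp (b * (n i / (s i - b) + 1 / (s i - b))) := by
        rw [← Real.exp_mul]; ring_nf
    _ ≤ Real.exp (b * (t + 0) + 1) := by gcongr

theorem tendstoUniformlyOn_exp_mul_gammaPDFReal (hn : Tendsto n l atTop)
    (hs : Tendsto (fun i => n i / s i) l (𝓝 t)) (ht : 0 < t) (b : ℝ) {u : Set ℝ} (hu : u ∈ 𝓝 t) :
    TendstoUniformlyOn (fun i y => Real.exp (b * y) * gammaPDFReal (n i + 1) (s i) y) 0 l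
      (Ioi 0 \ u) := by
  obtain ⟨C, hC⟩ := exists_eventually_div_sub_rpow_le hn hs ht b
  have hunif := tendstoUniformlyOn_gammaPDFReal hn (tendsto_natCast_div_sub hn hs ht b) ht hu
  have hs' := tendsto_atTop_of_tendsto_natCast_div hn hs ht
  rw [Metric.tendstoUniformlyOn_iff] at hunif ⊢
  intro ε hε
  filter_upwards [hunif (ε / (|C| + 1)) (by positivity), hC, hs'.eventually_gt_atTop b,
    hs'.eventually_gt_atTop 0] with i hi hCi hb h0 y hy
  have : 0 < s i - b := sub_pos.2 hb
  specialize hi y hy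
  rw [Pi.zero_apply, dist_zero_left] at hi ⊢
  rw [exp_mul_mul_gammaPDFReal _ h0.le hb, norm_mul, Real.norm_of_nonneg (by positivity)]
  calc (s i / (s i - b)) ^ (n i + 1 : ℝ) * ‖gammaPDFReal (n i + 1) (s i - b) y‖
      ≤ (|C| + 1) * ‖gammaPDFReal (n i + 1) (s i - b) y‖ := by
        gcongr; linarith [le_abs_self C]
    _ < ε := by rwa [lt_div_iff₀' (by positivity)] at hi

variable {E : Type*} [NormedAddCommGroup E] [NormedSpace ℝ E] [CompleteSpace E]

theorem tendsto_setIntegral_gammaPDFReal_smul (hn : Tendsto n l atTop)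
    (hs : Tendsto (fun i => n i / s i) l (𝓝 t)) (ht : 0 < t) {g : ℝ → E} {b : ℝ} (hb : 0 < b)
    (hint : IntegrableOn (fun y => Real.exp (-b * y) • g y) (Ioi 0)) (hcont : ContinuousAt g t) :
    Tendsto (fun i => ∫ y in Ioi 0, gammaPDFReal (n i + 1) (s i) y • g y) l (𝓝 (g t)) := by
  set p : ι → ℝ → ℝ := fun i y => Real.exp (b * y) * gammaPDFReal (n i + 1) (s i) y
  have hs_pos : ∀ᶠ i in l, 0 < s i :=
    (tendsto_atTop_of_tendsto_natCast_div hn hs ht).eventually_gt_atTop 0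
  have hp_nonneg : ∀ᶠ i in l, ∀ y ∈ Ioi (0 : ℝ), 0 ≤ p i y := by
    filter_upwards [hs_pos] with i hi y _
    exact mul_nonneg (Real.exp_pos _).le (gammaPDFReal_nonneg (by positivity) hi y)
  have hp_meas : ∀ i, AEStronglyMeasurable (p i) ((expDecayMeasure b).restrict (Ioi 0)) :=
    fun i => (Measurable.mul (by fun_prop) (measurable_gammaPDFReal _ _)).aestronglyMeasurable
  have hp_mass : ∀ᶠ i in l, ∫ y in Ioi 0, p i y ∂expDecayMeasure b = 1 := by
    filter_upwards [hs_pos] with i hi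
    have hcancel := setIntegral_expDecayMeasure b (gammaPDFReal (n i + 1) (s i)) (fun _ => (1 : ℝ))
      (measurableSet_Ioi (a := (0 : ℝ)))
    simp only [smul_eq_mul, mul_one] at hcancel
    exact hcancel.trans (setIntegral_Ioi_gammaPDFReal (by positivity) hi)
  have hpeak := tendsto_setIntegral_peak_smul_of_integrableOn_of_tendsto measurableSet_Ioi
    measurableSet_Ioi Subset.rfl self_mem_nhdsWithin (expDecayMeasure_Ioi_lt_top hb 0).ne
    hp_nonneg
    (fun u hu htu => tendstoUniformlyOn_exp_mul_gammaPDFReal hn hs ht b (hu.mem_nhds htu))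
    (tendsto_const_nhds.congr' (hp_mass.mono fun _ h => h.symm))
    (.of_forall hp_meas) ((integrableOn_expDecayMeasure_iff b measurableSet_Ioi).2 hint)
    (hcont.mono_left nhdsWithin_le_nhds)
  simpa only [p, setIntegral_expDecayMeasure b _ _ measurableSet_Ioi] using hpeak

end GammaDensity

section Laplace

variable {E : Type*} [NormedAddCommGroup E] [NormedSpace ℂ E] {a : ℝ} {g : ℝ → E} {F : ℂ → E}

theorem hasDerivAt_exp_neg_mul_smul (y : ℝ) (v : E) (z : ℂ) :
    HasDerivAt (fun z => Complex.exp (-z * y) • v) (Complex.exp (-z * y) • (-y : ℂ) • v) z := by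
  have hexp := ((hasDerivAt_neg z).mul_const (y : ℂ)).cexp
  rw [neg_one_mul] at hexp
  rw [smul_smul]
  exact hexp.smul_const v

theorem norm_exp_neg_mul_smul_neg_smul_le {z : ℂ} {c d y : ℝ} (hd : 0 < d) (hz : c + d ≤ z.re)
    (hy : 0 ≤ y) (v : E) :
    ‖Complex.exp (-z * y) • (-y : ℂ) • v‖ ≤ d⁻¹ * ‖Real.exp (-c * y) • v‖ := by
  have hyd : y ≤ d⁻¹ * Real.exp (d * y) := by
    rw [← div_eq_inv_mul, le_div_iff₀ hd]
    linarith [Real.add_one_le_exp (d * y)]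
  have hexp : Real.exp (-z.re * y) * Real.exp (d * y) ≤ Real.exp (-c * y) := by
    rw [← Real.exp_add, ← add_mul]
    gcongr
    linarith
  have hre : (-z * y).re = -z.re * y := by rw [Complex.re_mul_ofReal, Complex.neg_re]
  rw [norm_smul, norm_smul, norm_smul, Complex.norm_exp, hre, norm_neg, Complex.norm_real,
    Real.norm_of_nonneg hy, Real.norm_of_nonneg (Real.exp_pos _).le]
  calc Real.exp (-z.re * y) * (y * ‖v‖)
      ≤ Real.exp (-z.re * y) * (d⁻¹ * Real.exp (d * y) * ‖v‖) := by gcongr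
    _ = d⁻¹ * (Real.exp (-z.re * y) * Real.exp (d * y) * ‖v‖) := by ring
    _ ≤ d⁻¹ * (Real.exp (-c * y) * ‖v‖) := by gcongr

/-- `F` is the Laplace transform of `g` on the half-plane `a < Re ξ`. Absolute convergence is part
of the notion, since the Bochner integral of a non-integrable function is `0`. -/
def HasLaplaceTransform (a : ℝ) (g : ℝ → E) (F : ℂ → E) : Prop :=
  ∀ ξ : ℂ, a < ξ.re →
    IntegrableOn (fun y : ℝ => Complex.exp (-ξ * y) • g y) (Ioi 0) ∧
      ∫ y in Ioi (0 : ℝ), Complex.exp (-ξ * y) • g y = F ξ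

namespace HasLaplaceTransform

theorem congr {g' : ℝ → E} {F' : ℂ → E} (h : HasLaplaceTransform a g F)
    (hg : EqOn g g' (Ioi 0)) (hF : EqOn F F' {ξ | a < ξ.re}) : HasLaplaceTransform a g' F' := by
  intro ξ hξ
  have hexp : EqOn (fun y : ℝ => Complex.exp (-ξ * y) • g y)
      (fun y : ℝ => Complex.exp (-ξ * y) • g' y) (Ioi 0) :=
    fun y hy => congrArg (Complex.exp (-ξ * y) • ·) (hg hy)
  exact ⟨(h ξ hξ).1.congr_fun hexp measurableSet_Ioi,
    by rw [← hF hξ, ← (h ξ hξ).2, setIntegral_congr_fun measurableSet_Ioi hexp]⟩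

theorem integrableOn_exp_smul (h : HasLaplaceTransform a g F) {s : ℝ} (hs : a < s) :
    IntegrableOn (fun y => Real.exp (-s * y) • g y) (Ioi 0) := by
  refine (h s (by rwa [Complex.ofReal_re])).1.congr_fun (fun y _ => ?_) measurableSet_Ioi
  dsimp only
  rw [← Complex.coe_smul]
  push_cast
  rfl

theorem aestronglyMeasurable (h : HasLaplaceTransform a g F) :
    AEStronglyMeasurable g (volume.restrict (Ioi 0)) := by
  have hexp : AEStronglyMeasurable (fun y : ℝ => Real.exp ((a + 1) * y))
      (volume.restrict (Ioi 0)) := by fun_prop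
  refine (hexp.smul (h.integrableOn_exp_smul (lt_add_one a)).aestronglyMeasurable).congr
    (ae_of_all _ fun y => ?_)
  simp only [Pi.smul_apply', smul_smul, ← Real.exp_add, neg_mul, add_neg_cancel, Real.exp_zero,
    one_smul]

theorem deriv (h : HasLaplaceTransform a g F) :
    HasLaplaceTransform a (fun y => (-y : ℂ) • g y) (deriv F) := by
  intro ξ hξ
  obtain ⟨d, hd, had⟩ : ∃ d, 0 < d ∧ a + 2 * d < ξ.re := ⟨(ξ.re - a) / 3, by linarith, by linarith⟩
  have hnear : {z : ℂ | a + 2 * d < z.re} ∈ 𝓝 ξ :=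
    (isOpen_lt continuous_const Complex.continuous_re).mem_nhds had
  have hF : F =ᶠ[𝓝 ξ] fun z => ∫ y in Ioi (0 : ℝ), Complex.exp (-z * y) • g y := by
    filter_upwards [hnear] with z hz
    have : a + 2 * d < z.re := hz
    exact (h z (by linarith)).2.symm
  have hmeas (z : ℂ) : AEStronglyMeasurable (fun y : ℝ => Complex.exp (-z * y) • g y)
      (volume.restrict (Ioi 0)) :=
    AEStronglyMeasurable.smul (by fun_prop) h.aestronglyMeasurable
  have hmeas' : AEStronglyMeasurable (fun y : ℝ => Complex.exp (-ξ * y) • (-y : ℂ) • g y)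
      (volume.restrict (Ioi 0)) :=
    AEStronglyMeasurable.smul (by fun_prop)
      (AEStronglyMeasurable.smul (by fun_prop) h.aestronglyMeasurable)
  have hbound : ∀ᵐ y : ℝ ∂volume.restrict (Ioi (0 : ℝ)), ∀ z ∈ {z : ℂ | a + 2 * d < z.re},
      ‖Complex.exp (-z * y) • (-y : ℂ) • g y‖ ≤ d⁻¹ * ‖Real.exp (-(a + d) * y) • g y‖ := by
    refine ae_restrict_of_forall_mem measurableSet_Ioi fun y hy z hz => ?_
    have : a + 2 * d < z.re := hz
    exact norm_exp_neg_mul_smul_neg_smul_le hd (by linarith) (le_of_lt hy) (g y)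
  obtain ⟨hint, hderiv⟩ := hasDerivAt_integral_of_dominated_loc_of_deriv_le hnear
    (.of_forall hmeas) (h ξ hξ).1 hmeas' hbound
    ((h.integrableOn_exp_smul (by linarith)).norm.const_mul d⁻¹)
    (ae_of_all _ fun y z _ => hasDerivAt_exp_neg_mul_smul y (g y) z)
  exact ⟨hint, (hF.deriv_eq.trans hderiv.deriv).symm⟩

theorem iteratedDeriv (h : HasLaplaceTransform a g F) (n : ℕ) :
    HasLaplaceTransform a (fun y => (-y : ℂ) ^ n • g y) (iteratedDeriv n F) := by
  induction n with
  | zero => simpa only [pow_zero, one_smul, iteratedDeriv_zero] using h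
  | succ n ih =>
    rw [iteratedDeriv_succ]
    simpa only [smul_smul, ← pow_succ'] using ih.deriv

theorem intervalIntegrable (h : HasLaplaceTransform a g F) {x : ℝ} (hx : 0 ≤ x) :
    IntervalIntegrable g volume 0 x := by
  have hexp : ContinuousOn (fun y : ℝ => Real.exp ((a + 1) * y)) (uIcc 0 x) := by fun_prop
  have hint : IntervalIntegrable (fun y => Real.exp (-(a + 1) * y) • g y) volume 0 x :=
    (intervalIntegrable_iff_integrableOn_Ioc_of_le hx).2
      ((h.integrableOn_exp_smul (lt_add_one a)).mono_set Ioc_subset_Ioi_self)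
  simpa only [smul_smul, ← Real.exp_add, neg_mul, add_neg_cancel, Real.exp_zero, one_smul] using
    hint.continuousOn_smul hexp

theorem continuousOn_primitive (h : HasLaplaceTransform a g F) :
    ContinuousOn (fun x => ∫ y in (0 : ℝ)..x, g y) (Ioi 0) := by
  intro x hx
  have hx0 : (0 : ℝ) < x := hx
  have hint : IntegrableOn g (uIcc 0 (x + 1)) :=
    (intervalIntegrable_iff').1 (h.intervalIntegrable (by linarith))
  have hcont := intervalIntegral.continuousOn_primitive_interval hint
  refine (hcont.continuousAt ?_).continuousWithinAt
  rw [uIcc_of_le (by linarith)]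
  exact Icc_mem_nhds hx0 (lt_add_one x)

theorem primitive [CompleteSpace E] (ha : 0 ≤ a) (h : HasLaplaceTransform a g F) :
    HasLaplaceTransform a (fun x => ∫ y in (0 : ℝ)..x, g y) (fun ξ => ξ⁻¹ • F ξ) := by
  intro ξ hξ
  have hre : (-ξ).re < 0 := by rw [Complex.neg_re]; linarith
  -- The antiderivative times `e^{-ξx}` is the convolution of `e^{-ξ·}` and `e^{-ξ·} g` on `(0, ∞)`.
  have hexp := integrableOn_exp_mul_complex_Ioi hre 0
  have hconv (x : ℝ) : ∫ t in (0 : ℝ)..x, ContinuousLinearMap.lsmul ℝ ℂ (Complex.exp (-ξ * t))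
      (Complex.exp (-ξ * (x - t : ℝ)) • g (x - t)) =
      Complex.exp (-ξ * x) • ∫ y in (0 : ℝ)..x, g y := by
    have hmul (t : ℝ) : Complex.exp (-ξ * t) * Complex.exp (-ξ * (x - t : ℝ)) =
        Complex.exp (-ξ * x) := by
      rw [← Complex.exp_add]; push_cast; ring_nf
    simp only [ContinuousLinearMap.lsmul_apply, smul_smul, hmul]
    rw [intervalIntegral.integral_smul, intervalIntegral.integral_comp_sub_left, sub_self,
      sub_zero]
  have hint := integrable_posConvolution hexp (h ξ hξ).1 (ContinuousLinearMap.lsmul ℝ ℂ)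
  have hval := integral_posConvolution hexp (h ξ hξ).1 (ContinuousLinearMap.lsmul ℝ ℂ)
  simp only [posConvolution, hconv] at hint hval
  refine ⟨(integrable_indicator_iff measurableSet_Ioi).1 hint, ?_⟩
  rw [hval, (h ξ hξ).2, integral_exp_mul_complex_Ioi hre, ContinuousLinearMap.lsmul_apply,
    Complex.ofReal_zero, mul_zero, Complex.exp_zero, neg_div_neg_eq, one_div]

theorem setIntegral_gammaPDFReal_smul (h : HasLaplaceTransform a g F) (n : ℕ) {s : ℝ}
    (hs : a < s) :
    ∫ y in Ioi 0, gammaPDFReal (n + 1) s y • g y =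
      ((-1) ^ n * (s ^ (n + 1) / n.factorial) : ℂ) • _root_.iteratedDeriv n F s := by
  rw [← (h.iteratedDeriv n s (by rwa [Complex.ofReal_re])).2, ← integral_smul]
  refine setIntegral_congr_fun measurableSet_Ioi fun y hy => ?_
  dsimp only
  have hsign : (-1 : ℂ) ^ n * (-1) ^ n = 1 := by rw [← mul_pow, neg_one_mul, neg_neg, one_pow]
  rw [gammaPDFReal_natCast_add_one n s (le_of_lt hy), smul_smul, smul_smul, ← Complex.coe_smul,
    neg_pow (y : ℂ)]
  congr 1
  push_cast
  rw [neg_mul]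
  linear_combination
    -(s ^ (n + 1) / n.factorial * y ^ n * Complex.exp (-(s * y)) : ℂ) * hsign

end HasLaplaceTransform

end Laplace

/-- The Grünwald-type coefficient `G_{l,h} = ((-1)^l / (l! h^l)) F^{(l)}(1/h)` of a transform `F`,
set to `0` for `l < 0`. -/
def grunwaldCoeff (F : ℂ → ℂ) (l : ℤ) (h : ℝ) : ℝ :=
  if l < 0 then 0
  else (((-1 : ℂ) ^ l.toNat / ((Nat.factorial l.toNat : ℂ) * (h : ℂ) ^ l.toNat)) *
    iteratedDeriv l.toNat F ((1 : ℂ) / (h : ℂ))).re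

section PostWidder

variable {a : ℝ} {g : ℝ → ℝ} {F : ℂ → ℂ}

theorem mul_grunwaldCoeff_inv (h : HasLaplaceTransform a (fun y => (g y : ℂ)) F) (n : ℕ) {s : ℝ}
    (hs : a < s) : s * grunwaldCoeff F n s⁻¹ = ∫ y in Ioi 0, gammaPDFReal (n + 1) s y * g y := by
  have hgamma := h.setIntegral_gammaPDFReal_smul n hs
  simp only [Complex.real_smul, ← Complex.ofReal_mul, integral_complex_ofReal, smul_eq_mul]
    at hgamma
  rw [grunwaldCoeff, if_neg (Int.natCast_nonneg n).not_gt, Int.toNat_natCast, one_div,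
    Complex.ofReal_inv, inv_inv, ← Complex.re_ofReal_mul, ← Complex.ofReal_re (∫ y in Ioi 0, _),
    hgamma]
  congr 1
  rw [inv_pow, pow_succ]
  field_simp

theorem tendstoLocallyUniformlyOn_grunwaldCoeff
    (h : HasLaplaceTransform a (fun y => (g y : ℂ)) F) (hg : ContinuousOn g (Ioi 0)) (j : ℕ) :
    TendstoLocallyUniformlyOn
      (fun (m : ℕ) t => (m / t) * grunwaldCoeff F ((m : ℤ) - j) (t / m)) g atTop (Ioi 0) := by
  rw [isOpen_Ioi.tendstoLocallyUniformlyOn_iff_forall_tendsto]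
  intro t (ht : 0 < t)
  have hgt : ContinuousAt g t := hg.continuousAt (Ioi_mem_nhds ht)
  set n : ℕ × ℝ → ℕ := fun p => p.1 - j
  set s : ℕ × ℝ → ℝ := fun p => p.1 / p.2
  have hm : Tendsto (fun p : ℕ × ℝ => p.1) (atTop ×ˢ 𝓝 t) atTop := tendsto_fst
  have hn : Tendsto n (atTop ×ˢ 𝓝 t) atTop := (tendsto_sub_atTop_nat j).comp hm
  have hratio : Tendsto (fun p => n p / s p) (atTop ×ˢ 𝓝 t) (𝓝 t) :=
    tendsto_natCast_sub_div_natCast_div j hm tendsto_snd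
  have hexp : IntegrableOn (fun y => Real.exp (-(max a 0 + 1) * y) • g y) (Ioi 0) := by
    have hexpC := h.integrableOn_exp_smul (s := max a 0 + 1) (by linarith [le_max_left a 0])
    simp only [Complex.real_smul, ← Complex.ofReal_mul] at hexpC
    exact hexpC.re
  have hlim := tendsto_setIntegral_gammaPDFReal_smul hn hratio ht
    (by positivity : (0 : ℝ) < max a 0 + 1) hexp hgt
  have hcoeff : Tendsto (fun p : ℕ × ℝ => p.1 / p.2 * grunwaldCoeff F (p.1 - j) (p.2 / p.1))
      (atTop ×ˢ 𝓝 t) (𝓝 (g t)) := by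
    refine hlim.congr' ?_
    filter_upwards [hm.eventually_ge_atTop j,
      (tendsto_atTop_of_tendsto_natCast_div hn hratio ht).eventually_gt_atTop a] with p hpj hps
    rw [← inv_div (p.1 : ℝ), ← Nat.cast_sub hpj]
    exact (mul_grunwaldCoeff_inv h (n p) hps).symm
  exact ((hgt.tendsto.comp tendsto_snd).prodMk_nhds hcoeff).trans (nhds_le_uniformity (g t))

end PostWidder

section IteratedAntiderivative

variable {k : ℝ → ℝ}

theorem kIter_eq_zero_of_lt (hk : ∀ x < -1, k x = 0) (n : ℕ) {x : ℝ} (hx : x < -1) :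
    kIter k n x = 0 := by
  induction n generalizing x with
  | zero => exact hk x hx
  | succ n ih => exact setIntegral_eq_zero_of_forall_eq_zero fun y hy => ih (lt_of_le_of_lt hy hx)

theorem kIter_succ_sub_one (hk : ∀ x < -1, k x = 0) (n : ℕ) {x : ℝ} (hx : 0 ≤ x) :
    kIter k (n + 1) (x - 1) = ∫ y in (0 : ℝ)..x, kIter k n (y - 1) := by
  rw [intervalIntegral.integral_comp_sub_right (kIter k n), zero_sub,
    intervalIntegral.integral_of_le (by linarith), ← integral_Icc_eq_integral_Ioc]
  refine setIntegral_eq_of_subset_of_forall_sdiff_eq_zero measurableSet_Iic Icc_subset_Iic_self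
    fun y hy => kIter_eq_zero_of_lt hk n ?_
  exact not_le.1 fun hy1 => hy.2 ⟨hy1, hy.1⟩

variable {a : ℝ} {F : ℂ → ℂ}

theorem hasLaplaceTransform_kIter (ha : 0 ≤ a) (hk : ∀ x < -1, k x = 0)
    (hLaplace : HasLaplaceTransform a (fun y => (k (y - 1) : ℂ)) F) (n : ℕ) :
    HasLaplaceTransform a (fun y => (kIter k n (y - 1) : ℂ)) (fun ξ => F ξ / ξ ^ n) := by
  induction n with
  | zero => simpa only [kIter, pow_zero, div_one] using hLaplace
  | succ n ih =>
    refine (ih.primitive ha).congr (fun x hx => ?_) fun ξ _ => ?_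
    · dsimp only
      rw [kIter_succ_sub_one hk n (le_of_lt hx), intervalIntegral.integral_ofReal]
    · dsimp only
      rw [smul_eq_mul, pow_succ, ← div_div, inv_mul_eq_div]

theorem continuousOn_kIter_sub_one (ha : 0 ≤ a) (hk : ∀ x < -1, k x = 0)
    (hcont : ContinuousOn k (Ioi (-1)))
    (hLaplace : HasLaplaceTransform a (fun y => (k (y - 1) : ℂ)) F) (n : ℕ) :
    ContinuousOn (fun y => kIter k n (y - 1)) (Ioi 0) := by
  cases n with
  | zero => exact hcont.comp (by fun_prop) fun y (hy : 0 < y) => by simpa using hy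
  | succ n =>
    have hprim := Complex.continuous_re.comp_continuousOn
      (hasLaplaceTransform_kIter ha hk hLaplace n).continuousOn_primitive
    refine hprim.congr fun x hx => ?_
    dsimp only [Function.comp_apply]
    rw [kIter_succ_sub_one hk n (le_of_lt hx), intervalIntegral.integral_ofReal, Complex.ofReal_re]

end IteratedAntiderivative

theorem postWidder_uniform_general {a : ℝ} (ha : 0 ≤ a) {k : ℝ → ℝ} {ψ : ℂ → ℂ}
    (hk : ∀ x < -1, k x = 0) (hcont : ContinuousOn k (Ioi (-1)))
    (hLaplace : HasLaplaceTransform a (fun y => (k (y - 1) : ℂ)) (fun ξ => ξ / ψ ξ))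
    {i : ℤ} (hi : -1 ≤ i) (j : ℕ) :
    TendstoLocallyUniformlyOn
      (fun (m : ℕ) x => ((m : ℝ) / (x + 1)) *
        grunwaldCoeff (fun ξ => ξ ^ (-i) / ψ ξ) ((m : ℤ) - j) ((x + 1) / m))
      (kIter k (i + 1).toNat) atTop (Ioi (-1)) := by
  have htransform : HasLaplaceTransform a (fun y => (kIter k (i + 1).toNat (y - 1) : ℂ))
      (fun ξ => ξ ^ (-i) / ψ ξ) := by
    refine (hasLaplaceTransform_kIter ha hk hLaplace (i + 1).toNat).congr (fun _ _ => rfl)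
      fun ξ (hξ : a < ξ.re) => ?_
    have hξ0 : ξ ≠ 0 := by rintro rfl; exact hξ.not_ge ha
    have hpow : ξ ^ (-i) = ξ / ξ ^ (i + 1).toNat := by
      rw [← zpow_natCast, Int.toNat_of_nonneg (by lia), zpow_add_one₀ hξ0, zpow_neg]
      field_simp
    dsimp only
    rw [hpow, div_right_comm]
  have hshift : MapsTo (fun x : ℝ => x + 1) (Ioi (-1)) (Ioi 0) :=
    fun x (hx : -1 < x) => neg_lt_iff_pos_add.1 hx
  have hlim := (tendstoLocallyUniformlyOn_grunwaldCoeff htransform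
    (continuousOn_kIter_sub_one ha hk hcont hLaplace _) j).comp _ hshift (by fun_prop)
  simpa only [Function.comp_def, add_sub_cancel_right] using hlim

/-- Post–Widder uniform convergence of the Grünwald-type coefficients
to the scale functions `k_i⁺` on `[-1+δ, 1]`. -/
theorem postWidder_uniform (φ : Measure ℝ) (hH0 : H0 φ) (k : ℝ → ℝ)
    (hk : IsScaleKernel φ k) (δ : ℝ) (hδ : 0 < δ)
    (i : ℤ) (hi : i ∈ ({-1, 0, 1} : Set ℤ)) (j : ℕ) :
    TendstoUniformlyOn
      (fun (m : ℕ) (x : ℝ) =>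
        ((m : ℝ) / (x + 1)) * grunKZ φ i ((m : ℤ) - (j : ℤ)) ((x + 1) / m))
      (kIter k (i + 1).toNat) atTop (Icc (-1 + δ) 1) := by
  refine (tendstoLocallyUniformlyOn_iff_tendstoUniformlyOn_of_compact isCompact_Icc).1 <|
    (postWidder_uniform_general le_rfl hk.1 hk.2.2.1 hk.2.2.2.2.2 ?_ j).mono fun x hx => ?_
  · rcases hi with rfl | rfl | rfl <;> norm_num
  · exact lt_of_lt_of_le (by linarith) hx.1
end
end

section
/- First-order expansion of the order ψ−1 quadrature: under (H0), let m ≥ 6 and let g ∈ C^m[−1,1] satisfy g^{(j)}(−1) = 0 for j = 0, 1, …, m; extend g by zero to (−∞,−1). Define I^ψ_+ g(x) = ∫_{−1}^x k₀⁺(x − y − 1) g(y) dy for x ∈ [−1,1] and I^ψ_+ g(x) = 0 for x < −1, and set F₊[g](x) = −(1/2) ∫_0^{x+1} g'(x − z) ( ∫_0^z u φ((u,∞)) k₋₁⁺(z − u − 1) du ) dz. Then F₊[g] is continuous on [−1,1] with F₊[g](−1) = 0, and there is a constant C > 0 such that for every x ∈ [−1,1] and every h ∈ (0,1]: | Σ_{j=0}^∞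 G^{ψ−1}_{j,h} (I^ψ_+ g)(x − jh) − ∫_{−1}^x g(y) dy − h F₊[g](x) | ≤ C h². -/
open MeasureTheory Set Filter Topology

noncomputable section

/-- The Lévy integral `I^ψ_+ g (x) = ∫_{-1}^x k₀⁺(x-y-1) g(y) dy` for `x ≥ -1`, and `0`
for `x < -1`. -/
def IplusOp (k0 g : ℝ → ℝ) (x : ℝ) : ℝ :=
  if -1 ≤ x then ∫ y in (-1 : ℝ)..x, k0 (x - y - 1) * g y else 0

/-- The first-order correction term
`F₊[g](x) = -(1/2) ∫_0^{x+1} g'(x-z) (∫_0^z u φ((u,∞)) k₋₁⁺(z-u-1) du) dz`. -/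
def Fplus (φ : Measure ℝ) (k g : ℝ → ℝ) (x : ℝ) : ℝ :=
  -(1 / 2) * ∫ z in (0 : ℝ)..(x + 1),
    deriv g (x - z) * ∫ u in (0 : ℝ)..z, u * levyTail φ u * k (z - u - 1)

/-!
Writing `ν(y) = φ((y, ∞))`, one has `ψ(ξ) / ξ = ∫₀^∞ ν(y) (1 - e^{-ξ y}) dy`, so the operator of
order `ψ - 1` is the generator `F ↦ ∫₀^∞ ν(y) (F(s) - F(s - y)) dy`. Differentiating under the
integral at `ξ = 1/h` gives `G_j = ∫₀^∞ ν(y) ([j = 0] - P(N = j)) dy` with `N` Poisson of mean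
`y / h`: the quadrature replaces the translate `F(s - y)` by the average of `F(s - N h)`. Since
`N h` has mean `y` and variance `h y`, this average differs from `F(s - y)` by
`(h / 2) y F''(s - y) + O(h² (1 ∧ y))`, where the bound for small `y` comes from all central moments
of `N h` being divisible by `y`. Convolution with the scale kernel `k₋₁` inverts the generator, by
uniqueness of Laplace transforms, and turns the second-order term into `F₊[g]` when `F` is the
primitive of `g`.
-/

/-! ### Weights with a singularity at the origin -/

/-- Weights `ν` integrating `min 1 y` on `(0, ∞)`, such as the tail of a Lévy measure with
`∫ (z² ∧ z) φ(dz) < ∞`. -/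
def IsTailWeight (ν : ℝ → ℝ) : Prop := IntegrableOn (fun y => min 1 y * ν y) (Ioi 0)

namespace IsTailWeight

variable {E : Type*} [NormedAddCommGroup E] [NormedSpace ℝ E] {ν : ℝ → ℝ}

theorem aestronglyMeasurable (hν : IsTailWeight ν) :
    AEStronglyMeasurable ν (volume.restrict (Ioi 0)) := by
  have hinv : Measurable fun y : ℝ => (min 1 y)⁻¹ := by fun_prop
  refine (hinv.aestronglyMeasurable.mul hν.1).congr ?_
  exact ae_restrict_of_forall_mem measurableSet_Ioi fun y (hy : 0 < y) =>
    inv_mul_cancel_left₀ (lt_min one_pos hy).ne' _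

theorem norm_smul_le {F : ℝ → E} {C y : ℝ} (hy : 0 < y) (hF : ‖F y‖ ≤ C * min 1 y) :
    ‖ν y • F y‖ ≤ C * ‖min 1 y * ν y‖ := by
  calc ‖ν y • F y‖ ≤ ‖ν y‖ * (C * min 1 y) := by rw [norm_smul]; gcongr
    _ = C * ‖min 1 y * ν y‖ := by
      rw [norm_mul, Real.norm_of_nonneg (le_min zero_le_one hy.le)]; ring

theorem integrableOn_smul (hν : IsTailWeight ν) {F : ℝ → E}
    (hF : AEStronglyMeasurable F (volume.restrict (Ioi 0))) {C : ℝ}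
    (hC : ∀ y, 0 < y → ‖F y‖ ≤ C * min 1 y) : IntegrableOn (fun y => ν y • F y) (Ioi 0) :=
  (hν.norm.const_mul C).mono' (hν.aestronglyMeasurable.smul hF)
    (ae_restrict_of_forall_mem measurableSet_Ioi fun y hy => norm_smul_le hy (hC y hy))

theorem norm_integral_smul_le (hν : IsTailWeight ν) {F : ℝ → E} {C : ℝ}
    (hC : ∀ y, 0 < y → ‖F y‖ ≤ C * min 1 y) :
    ‖∫ y in Ioi 0, ν y • F y‖ ≤ C * ∫ y in Ioi 0, ‖min 1 y * ν y‖ := by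
  rw [← integral_const_mul]
  exact norm_integral_le_of_norm_le (hν.norm.const_mul C)
    (ae_restrict_of_forall_mem measurableSet_Ioi fun y hy => norm_smul_le hy (hC y hy))

end IsTailWeight

theorem setIntegral_norm_Ioo_le {E : Type*} [NormedAddCommGroup E] {q : ℝ → E} {C y : ℝ}
    (hqi : IntegrableOn q (Ioi 0)) (hqC : ∀ a, 0 < a → ‖q a‖ ≤ C) (hy : 0 < y) :
    ∫ a in Ioo 0 y, ‖q a‖ ≤ max C (∫ a in Ioi 0, ‖q a‖) * min 1 y := by
  rcases le_total 1 y with h | h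
  · rw [min_eq_left h, mul_one]
    exact (setIntegral_mono_set hqi.norm (ae_of_all _ fun _ => norm_nonneg _)
      Ioo_subset_Ioi_self.eventuallyLE).trans (le_max_right _ _)
  · rw [min_eq_right h]
    calc ∫ a in Ioo 0 y, ‖q a‖ ≤ ∫ _ in Ioo 0 y, C :=
          setIntegral_mono_on (IntegrableOn.mono_set hqi.norm Ioo_subset_Ioi_self) (by simp)
            measurableSet_Ioo fun a ha => hqC a ha.1
      _ = C * y := by simp [hy.le, mul_comm]
      _ ≤ max C (∫ a in Ioi 0, ‖q a‖) * y := by gcongr; exact le_max_left _ _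

namespace IsTailWeight

variable {E : Type*} [NormedAddCommGroup E] [NormedSpace ℝ E] {ν : ℝ → ℝ} {q : ℝ → E} {C : ℝ}

theorem indicator_smul_apply (ν : ℝ → ℝ) (q : ℝ → E) (y a : ℝ) :
    {p : ℝ × ℝ | p.2 < p.1}.indicator (fun p => ν p.1 • q p.2) (y, a)
      = ν y • (Iio y).indicator q a := by
  by_cases h : a < y <;> simp [h]

theorem integrable_indicator_smul (hν : IsTailWeight ν) (hqi : IntegrableOn q (Ioi 0))
    (hqC : ∀ a, 0 < a → ‖q a‖ ≤ C) :
    Integrable ({p : ℝ × ℝ | p.2 < p.1}.indicator fun p => ν p.1 • q p.2)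
      ((volume.restrict (Ioi 0)).prod (volume.restrict (Ioi 0))) := by
  set K := {p : ℝ × ℝ | p.2 < p.1}.indicator fun p => ν p.1 • q p.2
  have hKm : AEStronglyMeasurable K
      ((volume.restrict (Ioi 0)).prod (volume.restrict (Ioi 0))) :=
    (hν.aestronglyMeasurable.comp_fst.smul hqi.aestronglyMeasurable.comp_snd).indicator
      (measurableSet_lt measurable_snd measurable_fst)
  have hKn (y : ℝ) : ∫ a in Ioi 0, ‖K (y, a)‖ = ‖ν y • ∫ a in Ioo 0 y, ‖q a‖‖ := by
    simp_rw [K, indicator_smul_apply, norm_smul, norm_indicator_eq_indicator_norm]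
    rw [integral_const_mul, setIntegral_indicator measurableSet_Iio, Ioi_inter_Iio,
      Real.norm_of_nonneg (integral_nonneg fun _ => norm_nonneg _)]
  rw [integrable_prod_iff hKm]
  refine ⟨ae_of_all _ fun y => ?_, (hν.norm.const_mul (max C (∫ a in Ioi 0, ‖q a‖))).mono'
    hKm.norm.integral_prod_right' (ae_restrict_of_forall_mem measurableSet_Ioi fun y hy => ?_)⟩
  · simp_rw [K, indicator_smul_apply]
    exact (hqi.indicator measurableSet_Iio).smul _
  · rw [hKn, norm_norm]
    refine norm_smul_le (F := fun y => ∫ a in Ioo 0 y, ‖q a‖) hy ?_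
    rw [Real.norm_of_nonneg (integral_nonneg fun _ => norm_nonneg _)]
    exact setIntegral_norm_Ioo_le hqi hqC hy

theorem setIntegral_indicator_smul [CompleteSpace E] {a : ℝ} (ha : 0 < a) :
    ∫ y in Ioi 0, {p : ℝ × ℝ | p.2 < p.1}.indicator (fun p => ν p.1 • q p.2) (y, a)
      = (∫ y in Ioi a, ν y) • q a := by
  have hK : (fun y => {p : ℝ × ℝ | p.2 < p.1}.indicator (fun p => ν p.1 • q p.2) (y, a))
      = (Ioi a).indicator fun y => ν y • q a := by
    ext y; by_cases h : a < y <;> simp [h]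
  rw [hK, setIntegral_indicator measurableSet_Ioi, Ioi_inter_Ioi, sup_of_le_right ha.le,
    integral_smul_const]

theorem integrableOn_integral_Ioi_smul [CompleteSpace E] (hν : IsTailWeight ν)
    (hqi : IntegrableOn q (Ioi 0)) (hqC : ∀ a, 0 < a → ‖q a‖ ≤ C) :
    IntegrableOn (fun a => (∫ y in Ioi a, ν y) • q a) (Ioi 0) :=
  (hν.integrable_indicator_smul hqi hqC).integral_prod_right.congr
    (ae_restrict_of_forall_mem measurableSet_Ioi fun _ => setIntegral_indicator_smul)

theorem integral_integral_Ioi_smul [CompleteSpace E] (hν : IsTailWeight ν)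
    (hqi : IntegrableOn q (Ioi 0)) (hqC : ∀ a, 0 < a → ‖q a‖ ≤ C) :
    ∫ a in Ioi 0, (∫ y in Ioi a, ν y) • q a = ∫ y in Ioi 0, ν y • ∫ a in (0 : ℝ)..y, q a := by
  have hK := hν.integrable_indicator_smul hqi hqC
  rw [← setIntegral_congr_fun measurableSet_Ioi fun a ha => setIntegral_indicator_smul ha,
    ← integral_prod_symm _ hK, integral_prod _ hK]
  refine setIntegral_congr_fun measurableSet_Ioi fun y (hy : 0 < y) => ?_
  simp only [indicator_smul_apply]
  rw [integral_smul, setIntegral_indicator measurableSet_Iio, Ioi_inter_Iio,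
    intervalIntegral.integral_of_le hy.le, integral_Ioc_eq_integral_Ioo]

end IsTailWeight

/-! ### Tails of Lévy measures -/

section LevyTail

variable {φ : Measure ℝ}

theorem levyTail_nonneg (φ : Measure ℝ) (y : ℝ) : 0 ≤ levyTail φ y := ENNReal.toReal_nonneg

theorem measurable_levyTail (φ : Measure ℝ) : Measurable (levyTail φ) :=
  have h : Antitone fun y : ℝ => φ (Ioi y) := fun _ _ hab => measure_mono (Ioi_subset_Ioi hab)
  h.measurable.ennreal_toReal

theorem measure_Ioi_lt_top (hφ : ∫⁻ z in Ioi (0 : ℝ), ENNReal.ofReal (min (z ^ 2) z) ∂φ < ⊤)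
    {y : ℝ} (hy : 0 < y) : φ (Ioi y) < ⊤ := by
  have hc : 0 < ENNReal.ofReal (min (y ^ 2) y) := ENNReal.ofReal_pos.2 (lt_min (by positivity) hy)
  have hmul : ENNReal.ofReal (min (y ^ 2) y) * φ (Ioi y) < ⊤ := calc
    _ = ∫⁻ _ in Ioi y, ENNReal.ofReal (min (y ^ 2) y) ∂φ := (setLIntegral_const _ _).symm
    _ ≤ ∫⁻ z in Ioi y, ENNReal.ofReal (min (z ^ 2) z) ∂φ := by
      refine setLIntegral_mono (by fun_prop) fun z (hz : y < z) => ?_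
      gcongr
    _ ≤ _ := lintegral_mono_set (Ioi_subset_Ioi hy.le)
    _ < ⊤ := hφ
  exact ENNReal.lt_top_of_mul_ne_top_right hmul.ne hc.ne'

theorem antitoneOn_levyTail (hφ : ∫⁻ z in Ioi (0 : ℝ), ENNReal.ofReal (min (z ^ 2) z) ∂φ < ⊤) :
    AntitoneOn (levyTail φ) (Ioi 0) := fun _ ha _ _ hab =>
  ENNReal.toReal_mono (measure_Ioi_lt_top hφ ha).ne (measure_mono (Ioi_subset_Ioi hab))

theorem integral_min_one_le {z : ℝ} (hz : 0 ≤ z) :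
    ∫ t in (0 : ℝ)..z, min 1 t ≤ min (z ^ 2) z := by
  have hbound : ∀ c : ℝ, (∀ t ∈ Icc 0 z, min 1 t ≤ c) → ∫ t in (0 : ℝ)..z, min 1 t ≤ z * c := by
    intro c hc
    calc ∫ t in (0 : ℝ)..z, min 1 t ≤ ∫ _ in (0 : ℝ)..z, c :=
          intervalIntegral.integral_mono_on hz
            ((by fun_prop : Continuous fun t : ℝ => min 1 t).intervalIntegrable _ _) (by simp) hc
      _ = z * c := by simp
  refine le_min ?_ ?_
  · simpa [sq] using hbound z fun t ht => (min_le_right _ _).trans ht.2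
  · simpa using hbound 1 fun t _ => min_le_left _ _

/-- Layer cake: `∫ min(1, t) φ((t, ∞)) dt = ∫ (∫₀ᶻ min(1, t) dt) φ(dz)`. -/
theorem isTailWeight_levyTail
    (hφ : ∫⁻ z in Ioi (0 : ℝ), ENNReal.ofReal (min (z ^ 2) z) ∂φ < ⊤) :
    IsTailWeight (levyTail φ) := by
  refine ⟨((measurable_const.min measurable_id).mul
    (measurable_levyTail φ)).aestronglyMeasurable, ?_⟩
  rw [hasFiniteIntegral_iff_enorm]
  have hpos : ∀ᵐ z ∂φ.restrict (Ioi 0), 0 ≤ z :=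
    ae_restrict_of_forall_mem measurableSet_Ioi fun z hz => le_of_lt hz
  calc ∫⁻ y in Ioi (0 : ℝ), ‖min 1 y * levyTail φ y‖ₑ
      = ∫⁻ t in Ioi 0, φ.restrict (Ioi 0) {z | t < z} * ENNReal.ofReal (min 1 t) := by
        refine setLIntegral_congr_fun measurableSet_Ioi fun y (hy : 0 < y) => ?_
        have hm : 0 ≤ min 1 y := le_min zero_le_one hy.le
        have htail : φ.restrict (Ioi 0) {z | y < z} = φ (Ioi y) :=
          Measure.restrict_eq_self _ (Ioi_subset_Ioi hy.le)
        simp only [htail]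
        rw [Real.enorm_eq_ofReal (mul_nonneg hm (levyTail_nonneg _ _)), ENNReal.ofReal_mul hm,
          mul_comm, levyTail, ENNReal.ofReal_toReal (measure_Ioi_lt_top hφ hy).ne]
    _ = ∫⁻ z in Ioi 0, ENNReal.ofReal (∫ t in (0 : ℝ)..z, min 1 t) ∂φ :=
        (lintegral_comp_eq_lintegral_meas_lt_mul _ (f := id) (g := fun t => min 1 t) hpos
          measurable_id.aemeasurable
          (fun t _ => (by fun_prop : Continuous fun t : ℝ => min 1 t).intervalIntegrable _ _)
          (ae_restrict_of_forall_mem measurableSet_Ioi fun t ht =>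
            le_min zero_le_one (le_of_lt ht))).symm
    _ ≤ ∫⁻ z in Ioi 0, ENNReal.ofReal (min (z ^ 2) z) ∂φ :=
        setLIntegral_mono (by fun_prop) fun z hz =>
          ENNReal.ofReal_le_ofReal (integral_min_one_le (le_of_lt hz))
    _ < ⊤ := hφ

theorem exists_levyTail_pos (hφ : ∫⁻ z in Ioi (0 : ℝ), ENNReal.ofReal (min (z ^ 2) z) ∂φ < ⊤)
    (hφ₀ : φ (Ioi 0) ≠ 0) : ∃ y, 0 < y ∧ 0 < levyTail φ y := by
  by_contra! hle
  have hzero : ∀ n : ℕ, φ (Ioi (1 / ((n : ℝ) + 1))) = 0 := fun n => by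
    have hn : (0 : ℝ) < 1 / ((n : ℝ) + 1) := by positivity
    have h0 : levyTail φ _ = 0 := le_antisymm (hle _ hn) (levyTail_nonneg _ _)
    exact ((ENNReal.toReal_eq_zero_iff _).1 h0).resolve_right (measure_Ioi_lt_top hφ hn).ne
  refine hφ₀ (measure_mono_null (fun z (hz : 0 < z) => ?_) (measure_iUnion_null hzero))
  obtain ⟨n, hn⟩ := exists_nat_one_div_lt hz
  exact mem_iUnion.2 ⟨n, hn⟩

end LevyTail

theorem H0.measure_Ioi_zero_ne_zero {φ : Measure ℝ} (hφ : H0 φ) : φ (Ioi 0) ≠ 0 := fun h => by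
  have htop := hφ.2.2
  rw [setLIntegral_measure_zero _ _ (measure_mono_null Ioo_subset_Ioi_self h)] at htop
  exact ENNReal.zero_ne_top htop

/-! ### Laplace exponent and quadrature coefficients -/

section LaplaceExponent

theorem norm_cexp_neg_mul_ofReal (ξ : ℂ) (y : ℝ) :
    ‖Complex.exp (-ξ * (y : ℂ))‖ = Real.exp (-(ξ.re * y)) := by
  rw [Complex.norm_exp]
  simp

theorem norm_cexp_le_one_of_re_nonpos {z : ℂ} (hz : z.re ≤ 0) : ‖Complex.exp z‖ ≤ 1 := by
  rw [Complex.norm_exp]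
  exact Real.exp_le_one_iff.2 hz

theorem norm_one_sub_cexp_le_norm {z : ℂ} (hz : z.re ≤ 0) : ‖1 - Complex.exp z‖ ≤ ‖z‖ := by
  have h := (convex_halfSpace_re_le 0).norm_image_sub_le_of_norm_hasDerivWithin_le
    (fun w _ => (Complex.hasDerivAt_exp w).hasDerivWithinAt)
    (fun w hw => norm_cexp_le_one_of_re_nonpos hw) hz (show (0 : ℂ).re ≤ 0 by simp)
  simpa using h

theorem pow_mul_exp_neg_le (j : ℕ) {c y : ℝ} (hc : 0 < c) (hy : 0 < y) :
    y ^ j * Real.exp (-(c * y)) ≤ j.factorial / c ^ j := by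
  have h := Real.pow_div_factorial_le_exp (c * y) (by positivity) j
  rw [div_le_iff₀ (by positivity)] at h
  rw [Real.exp_neg, ← div_eq_mul_inv, div_le_div_iff₀ (Real.exp_pos _) (by positivity)]
  linarith [mul_pow c y j]

theorem pow_succ_mul_exp_neg_le (j : ℕ) {c y : ℝ} (hc : 0 < c) (hy : 0 < y) :
    y ^ (j + 1) * Real.exp (-(c * y)) ≤
      max (j.factorial / c ^ j) ((j + 1).factorial / c ^ (j + 1)) * min 1 y := by
  rcases le_total 1 y with h | h
  · rw [min_eq_left h, mul_one]
    exact (pow_mul_exp_neg_le (j + 1) hc hy).trans (le_max_right _ _)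
  · rw [min_eq_right h]
    calc y ^ (j + 1) * Real.exp (-(c * y)) = (y ^ j * Real.exp (-(c * y))) * y := by ring
      _ ≤ _ := by gcongr; exact (pow_mul_exp_neg_le j hc hy).trans (le_max_left _ _)

/-- The `j`-th derivative of `ξ ↦ 1 - e^{-ξ y}`. -/
def laplaceKernel (j : ℕ) (ξ : ℂ) (y : ℝ) : ℂ :=
  (if j = 0 then 1 else 0) - (-(y : ℂ)) ^ j * Complex.exp (-ξ * y)

theorem continuous_laplaceKernel (j : ℕ) (ξ : ℂ) : Continuous (laplaceKernel j ξ) := by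
  unfold laplaceKernel
  fun_prop

theorem hasDerivAt_laplaceKernel (j : ℕ) (ξ : ℂ) (y : ℝ) :
    HasDerivAt (fun ξ => laplaceKernel j ξ y) (laplaceKernel (j + 1) ξ y) ξ := by
  have hexp := (((hasDerivAt_id ξ).neg).mul_const (y : ℂ)).cexp
  refine ((hexp.const_mul ((-(y : ℂ)) ^ j)).const_sub (if j = 0 then 1 else 0)).congr_deriv ?_
  simp [laplaceKernel, pow_succ]
  ring

theorem norm_laplaceKernel_zero_le {ξ : ℂ} {y : ℝ} (hξ : 0 ≤ ξ.re) (hy : 0 < y) :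
    ‖laplaceKernel 0 ξ y‖ ≤ max 2 ‖ξ‖ * min 1 y := by
  have hre : (-ξ * (y : ℂ)).re ≤ 0 := by simpa using mul_nonneg hξ hy.le
  simp only [laplaceKernel, if_true, pow_zero, one_mul]
  rcases le_total 1 y with h | h
  · rw [min_eq_left h, mul_one]
    refine le_trans ((norm_sub_le _ _).trans ?_) (le_max_left _ _)
    linarith [norm_cexp_le_one_of_re_nonpos hre, norm_one (α := ℂ)]
  · rw [min_eq_right h]
    refine (norm_one_sub_cexp_le_norm hre).trans ?_
    rw [norm_mul, norm_neg, Complex.norm_real, Real.norm_of_nonneg hy.le]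
    gcongr
    exact le_max_right _ _

theorem norm_laplaceKernel_succ_le (j : ℕ) {c y : ℝ} {ξ : ℂ} (hc : 0 < c) (hξ : c ≤ ξ.re)
    (hy : 0 < y) : ‖laplaceKernel (j + 1) ξ y‖ ≤
      max (j.factorial / c ^ j) ((j + 1).factorial / c ^ (j + 1)) * min 1 y := by
  refine le_trans ?_ (pow_succ_mul_exp_neg_le j hc hy)
  rw [laplaceKernel, if_neg j.succ_ne_zero, zero_sub, norm_neg, norm_mul,
    norm_cexp_neg_mul_ofReal, norm_pow, norm_neg, Complex.norm_real, Real.norm_of_nonneg hy.le]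
  gcongr

variable {ν : ℝ → ℝ}

theorem IsTailWeight.integrableOn_smul_laplaceKernel (hν : IsTailWeight ν) (j : ℕ) {ξ : ℂ}
    (hξ : 0 < ξ.re) : IntegrableOn (fun y => ν y • laplaceKernel j ξ y) (Ioi 0) := by
  have hm := (continuous_laplaceKernel j ξ).aestronglyMeasurable (μ := volume.restrict (Ioi 0))
  cases j with
  | zero => exact hν.integrableOn_smul hm fun y hy => norm_laplaceKernel_zero_le hξ.le hy
  | succ j =>
    exact hν.integrableOn_smul hm fun y hy => norm_laplaceKernel_succ_le j hξ le_rfl hy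

theorem IsTailWeight.hasDerivAt_integral_laplaceKernel (hν : IsTailWeight ν) (j : ℕ) {ξ : ℂ}
    (hξ : 0 < ξ.re) :
    HasDerivAt (fun ξ => ∫ y in Ioi 0, ν y • laplaceKernel j ξ y)
      (∫ y in Ioi 0, ν y • laplaceKernel (j + 1) ξ y) ξ := by
  have hs : {z : ℂ | ξ.re / 2 < z.re} ∈ 𝓝 ξ :=
    (isOpen_lt continuous_const Complex.continuous_re).mem_nhds (half_lt_self hξ)
  have hm (i : ℕ) (z : ℂ) : AEStronglyMeasurable (fun y => ν y • laplaceKernel i z y)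
      (volume.restrict (Ioi 0)) :=
    hν.aestronglyMeasurable.smul (continuous_laplaceKernel i z).aestronglyMeasurable
  have hbound : ∀ᵐ y ∂volume.restrict (Ioi 0), ∀ z ∈ {z : ℂ | ξ.re / 2 < z.re},
      ‖ν y • laplaceKernel (j + 1) z y‖ ≤ max (j.factorial / (ξ.re / 2) ^ j)
        ((j + 1).factorial / (ξ.re / 2) ^ (j + 1)) * ‖min 1 y * ν y‖ :=
    ae_restrict_of_forall_mem measurableSet_Ioi fun y hy z hz =>
      norm_smul_le hy (norm_laplaceKernel_succ_le j (half_pos hξ) (le_of_lt hz) hy)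
  exact (hasDerivAt_integral_of_dominated_loc_of_deriv_le hs (Eventually.of_forall (hm j))
    (hν.integrableOn_smul_laplaceKernel j hξ) (hm (j + 1) ξ) hbound (hν.norm.const_mul _)
    (ae_of_all _ fun y z _ => (hasDerivAt_laplaceKernel j z y).fun_const_smul (ν y))).2

theorem IsTailWeight.iteratedDeriv_eq_integral (hν : IsTailWeight ν) {f : ℂ → ℂ}
    (hf : ∀ ξ : ℂ, 0 < ξ.re → f ξ = ∫ y in Ioi 0, ν y • laplaceKernel 0 ξ y) (j : ℕ) {ξ : ℂ}
    (hξ : 0 < ξ.re) : iteratedDeriv j f ξ = ∫ y in Ioi 0, ν y • laplaceKernel j ξ y := by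
  induction j generalizing ξ with
  | zero => exact hf ξ hξ
  | succ j ih =>
    have hnear : ∀ᶠ z : ℂ in 𝓝 ξ, 0 < z.re :=
      (isOpen_lt continuous_const Complex.continuous_re).mem_nhds hξ
    rw [iteratedDeriv_succ]
    exact ((hν.hasDerivAt_integral_laplaceKernel j hξ).congr_of_eventuallyEq
      (hnear.mono fun z hz => ih hz)).deriv

theorem IsTailWeight.re_integral_laplaceKernel_pos (hν : IsTailWeight ν)
    (hν₀ : ∀ y, 0 < y → 0 ≤ ν y) {y₀ : ℝ} (hy₀ : 0 < y₀) (hpos : ∀ y ∈ Ioo 0 y₀, 0 < ν y) {ξ : ℂ}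
    (hξ : 0 < ξ.re) : 0 < (∫ y in Ioi 0, ν y • laplaceKernel 0 ξ y).re := by
  have hi := hν.integrableOn_smul_laplaceKernel 0 hξ
  have hre : ∀ y : ℝ, 0 < y → 0 < (laplaceKernel 0 ξ y).re := fun y hy => by
    have hle := Complex.re_le_norm (Complex.exp (-ξ * (y : ℂ)))
    have hlt : Real.exp (-(ξ.re * y)) < 1 := Real.exp_lt_one_iff.2 (by nlinarith)
    rw [norm_cexp_neg_mul_ofReal] at hle
    simp only [laplaceKernel, if_true, pow_zero, one_mul, Complex.sub_re, Complex.one_re]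
    linarith
  have hire : IntegrableOn (fun y => (ν y • laplaceKernel 0 ξ y).re) (Ioi 0) := hi.re
  have hcomm := integral_re hi
  simp only [RCLike.re_to_complex] at hcomm
  rw [← hcomm, setIntegral_pos_iff_support_of_nonneg_ae _ hire]
  · refine lt_of_lt_of_le ?_ (measure_mono (s := Ioo 0 y₀) fun y hy => ⟨?_, hy.1⟩)
    · simpa using hy₀
    · simpa using ⟨(hpos y hy).ne', (hre y hy.1).ne'⟩
  · refine ae_restrict_of_forall_mem measurableSet_Ioi fun y hy => ?_
    simpa using mul_nonneg (hν₀ y hy) (hre y hy).le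

end LaplaceExponent

/-- The Poisson probability `e^{-t} t^j / j!`, for a real parameter `t`. -/
def poissonWeight (t : ℝ) (j : ℕ) : ℝ := Real.exp (-t) * (t ^ j / j.factorial)

theorem mul_laplaceKernel_one_div (j : ℕ) {h : ℝ} (hh : h ≠ 0) (y : ℝ) :
    (-1 : ℂ) ^ j / ((j.factorial : ℂ) * (h : ℂ) ^ j) * laplaceKernel j (1 / (h : ℂ)) y
      = (((if j = 0 then 1 else 0) - poissonWeight (y / h) j : ℝ) : ℂ) := by
  have hexp : Complex.exp (-(1 / (h : ℂ)) * (y : ℂ)) = Complex.exp (-(y / h)) := by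
    congr 1; ring
  have hsign : (-1 : ℂ) ^ j * (-(y : ℂ)) ^ j = (y : ℂ) ^ j := by rw [← mul_pow]; simp
  have hfac : (j.factorial : ℂ) ≠ 0 := by exact_mod_cast j.factorial_ne_zero
  have hh' : (h : ℂ) ≠ 0 := by exact_mod_cast hh
  rw [laplaceKernel, poissonWeight, hexp, mul_sub]
  push_cast
  congr 1
  · split_ifs with hj
    · simp [hj]
    · simp
  · rw [div_pow, div_mul_eq_mul_div, ← mul_assoc, hsign]
    field_simp

section psiFn

variable {φ : Measure ℝ}

theorem psiFn_div_eq_integral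
    (hφ : ∫⁻ z in Ioi (0 : ℝ), ENNReal.ofReal (min (z ^ 2) z) ∂φ < ⊤) {ξ : ℂ} (hξ : 0 < ξ.re) :
    psiFn φ ξ / ξ = ∫ y in Ioi 0, levyTail φ y • laplaceKernel 0 ξ y := by
  have h0 : ξ ≠ 0 := fun h => by simp [h] at hξ
  calc psiFn φ ξ / ξ
      = ∫ a in Ioi 0, (∫ y in Ioi a, levyTail φ y) • (ξ * Complex.exp (-ξ * (a : ℂ))) := by
        rw [psiFn, sq, mul_assoc, mul_div_assoc, mul_div_cancel_left₀ _ h0, ← integral_const_mul]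
        refine setIntegral_congr_fun measurableSet_Ioi fun a ha => ?_
        simp only [PhiFn, if_pos (mem_Ioi.1 ha), Complex.real_smul]
        ring
    _ = ∫ y in Ioi 0, levyTail φ y • ∫ a in (0 : ℝ)..y, ξ * Complex.exp (-ξ * (a : ℂ)) := by
        refine (isTailWeight_levyTail hφ).integral_integral_Ioi_smul (C := ‖ξ‖)
          ((integrableOn_exp_mul_complex_Ioi (by simpa using hξ) 0).const_mul ξ) fun a ha => ?_
        rw [norm_mul]
        exact mul_le_of_le_one_right (norm_nonneg _)
          (norm_cexp_le_one_of_re_nonpos (by simpa using mul_nonneg hξ.le ha.le))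
    _ = ∫ y in Ioi 0, levyTail φ y • laplaceKernel 0 ξ y := by
        refine setIntegral_congr_fun measurableSet_Ioi fun y _ => ?_
        rw [intervalIntegral.integral_const_mul, integral_exp_mul_complex (by simpa using h0)]
        simp only [laplaceKernel, if_true, pow_zero, one_mul, Complex.ofReal_zero, mul_zero,
          Complex.exp_zero]
        congr 1
        field_simp
        ring

theorem psiFn_ne_zero (hφ : ∫⁻ z in Ioi (0 : ℝ), ENNReal.ofReal (min (z ^ 2) z) ∂φ < ⊤)
    (hφ₀ : φ (Ioi 0) ≠ 0) {ξ : ℂ} (hξ : 0 < ξ.re) : psiFn φ ξ ≠ 0 := fun hψ => by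
  obtain ⟨y₀, hy₀, hpos⟩ := exists_levyTail_pos hφ hφ₀
  have h := (isTailWeight_levyTail hφ).re_integral_laplaceKernel_pos
    (fun y _ => levyTail_nonneg φ y) hy₀
    (fun y hy => hpos.trans_le (antitoneOn_levyTail hφ hy.1 hy₀ hy.2.le)) hξ
  rw [← psiFn_div_eq_integral hφ hξ, hψ, zero_div, Complex.zero_re] at h
  exact h.false

theorem grunPsiM1_eq_integral
    (hφ : ∫⁻ z in Ioi (0 : ℝ), ENNReal.ofReal (min (z ^ 2) z) ∂φ < ⊤) (j : ℕ) {h : ℝ}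
    (hh : 0 < h) :
    grunPsiM1 φ j h = ∫ y in Ioi 0,
      levyTail φ y * ((if j = 0 then 1 else 0) - poissonWeight (y / h) j) := by
  have hre : 0 < ((1 : ℂ) / (h : ℂ)).re := by
    rw [← Complex.ofReal_one, ← Complex.ofReal_div, Complex.ofReal_re]
    positivity
  rw [grunPsiM1, (isTailWeight_levyTail hφ).iteratedDeriv_eq_integral
    (fun ξ hξ => psiFn_div_eq_integral hφ hξ) j hre, ← integral_const_mul,
    ← Complex.ofReal_re (∫ y in Ioi 0, _), ← integral_complex_ofReal]
  congr 2
  ext y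
  rw [Complex.ofReal_mul, ← mul_laplaceKernel_one_div j hh.ne', Complex.real_smul]
  ring

end psiFn

/-! ### Convolution equations from Laplace transforms -/

/-- The measure `e^{-x} w(x) dx` on `(0, ∞)`; the damping makes it finite for a function `w` with
abscissa of convergence less than `1`. -/
def dampedMeasure (w : ℝ → ℝ) : Measure ℝ :=
  (volume.restrict (Ioi 0)).withDensity fun x => ENNReal.ofReal (Real.exp (-x) * w x)

section DampedMeasure

variable {u v w : ℝ → ℝ}

theorem isFiniteMeasure_dampedMeasure
    (hwi : IntegrableOn (fun x => Real.exp (-x) * w x) (Ioi 0)) :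
    IsFiniteMeasure (dampedMeasure w) :=
  isFiniteMeasure_withDensity_ofReal hwi.2

theorem toReal_smul_ae_eq_exp_mul_smul {E : Type*} [NormedAddCommGroup E] [NormedSpace ℝ E]
    (hw : ∀ x, 0 < x → 0 ≤ w x) (F : ℝ → E) :
    (fun x => (ENNReal.ofReal (Real.exp (-x) * w x)).toReal • F x)
      =ᵐ[volume.restrict (Ioi 0)] fun x => (Real.exp (-x) * w x) • F x :=
  ae_restrict_of_forall_mem measurableSet_Ioi fun x hx => by
    simp only [ENNReal.toReal_ofReal (mul_nonneg (Real.exp_pos _).le (hw x hx))]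

theorem integral_dampedMeasure {E : Type*} [NormedAddCommGroup E] [NormedSpace ℝ E]
    (hw : ∀ x, 0 < x → 0 ≤ w x)
    (hwi : IntegrableOn (fun x => Real.exp (-x) * w x) (Ioi 0)) (F : ℝ → E) :
    ∫ x, F x ∂(dampedMeasure w) = ∫ x in Ioi 0, (Real.exp (-x) * w x) • F x := by
  rw [dampedMeasure, integral_withDensity_eq_integral_toReal_smul₀
    hwi.1.aemeasurable.ennreal_ofReal (ae_of_all _ fun _ => ENNReal.ofReal_lt_top)]
  exact integral_congr_ae (toReal_smul_ae_eq_exp_mul_smul hw F)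

theorem integrable_dampedMeasure_iff {E : Type*} [NormedAddCommGroup E] [NormedSpace ℝ E]
    (hw : ∀ x, 0 < x → 0 ≤ w x)
    (hwi : IntegrableOn (fun x => Real.exp (-x) * w x) (Ioi 0)) (F : ℝ → E) :
    Integrable F (dampedMeasure w) ↔
      IntegrableOn (fun x => (Real.exp (-x) * w x) • F x) (Ioi 0) := by
  rw [dampedMeasure, integrable_withDensity_iff_integrable_smul₀'
    hwi.1.aemeasurable.ennreal_ofReal (ae_of_all _ fun _ => ENNReal.ofReal_lt_top)]
  exact integrable_congr (toReal_smul_ae_eq_exp_mul_smul hw F)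

theorem charFun_dampedMeasure (hw : ∀ x, 0 < x → 0 ≤ w x)
    (hwi : IntegrableOn (fun x => Real.exp (-x) * w x) (Ioi 0)) (t : ℝ) :
    charFun (dampedMeasure w) t
      = ∫ x in Ioi (0 : ℝ), Complex.exp (-(1 - t * Complex.I) * (x : ℂ)) * (w x : ℂ) := by
  rw [charFun_apply_real, integral_dampedMeasure hw hwi]
  congr 1
  ext x
  rw [Complex.real_smul]
  push_cast
  rw [mul_right_comm, ← Complex.exp_add]
  congr 2
  ring

variable (hu : ∀ x, 0 < x → 0 ≤ u x) (hv : ∀ x, 0 < x → 0 ≤ v x) (hw : ∀ x, 0 < x → 0 ≤ w x)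
  (hui : IntegrableOn (fun x => Real.exp (-x) * u x) (Ioi 0))
  (hvi : IntegrableOn (fun x => Real.exp (-x) * v x) (Ioi 0))
  (hwi : IntegrableOn (fun x => Real.exp (-x) * w x) (Ioi 0))
  (hL : ∀ ξ : ℂ, ξ.re = 1 →
    (∫ x in Ioi (0 : ℝ), Complex.exp (-ξ * (x : ℂ)) * (u x : ℂ))
      * (∫ x in Ioi (0 : ℝ), Complex.exp (-ξ * (x : ℂ)) * (v x : ℂ))
      = ∫ x in Ioi (0 : ℝ), Complex.exp (-ξ * (x : ℂ)) * (w x : ℂ))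

include hu hv hw hui hvi hwi hL

theorem conv_dampedMeasure : (dampedMeasure u).conv (dampedMeasure v) = dampedMeasure w := by
  have := isFiniteMeasure_dampedMeasure hui
  have := isFiniteMeasure_dampedMeasure hvi
  have := isFiniteMeasure_dampedMeasure hwi
  refine Measure.ext_of_charFun (funext fun t => ?_)
  rw [charFun_conv, charFun_dampedMeasure hu hui, charFun_dampedMeasure hv hvi,
    charFun_dampedMeasure hw hwi]
  exact hL _ (by simp)

theorem integral_mul_integral_mul_of_laplace {G : ℝ → ℝ} {x : ℝ}
    (hG : IntegrableOn (fun s => w s * G (x - s)) (Ioi 0)) :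
    ∫ b in Ioi 0, u b * ∫ a in Ioi 0, v a * G (x - b - a)
      = ∫ s in Ioi 0, w s * G (x - s) := by
  have := isFiniteMeasure_dampedMeasure hui
  have := isFiniteMeasure_dampedMeasure hvi
  have hexp : ∀ s : ℝ, Real.exp (-s) * Real.exp s = 1 := fun s => by simp [← Real.exp_add]
  set F : ℝ → ℝ := fun s => Real.exp s * G (x - s) with hF
  have hwF : ∀ s, (Real.exp (-s) * w s) • F s = w s * G (x - s) := fun s => by
    simp only [hF, smul_eq_mul]
    linear_combination (w s * G (x - s)) * hexp s
  have hFi : Integrable F ((dampedMeasure u).conv (dampedMeasure v)) := by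
    rw [conv_dampedMeasure hu hv hw hui hvi hwi hL, integrable_dampedMeasure_iff hw hwi]
    simpa only [hwF] using hG
  have hconv := integral_conv hFi
  rw [conv_dampedMeasure hu hv hw hui hvi hwi hL, integral_dampedMeasure hw hwi,
    integral_dampedMeasure hu hui] at hconv
  simp only [hwF] at hconv
  rw [hconv]
  congr 1
  ext b
  rw [integral_dampedMeasure hv hvi, smul_eq_mul, ← integral_const_mul, ← integral_const_mul]
  congr 1
  ext a
  simp only [hF, smul_eq_mul]
  rw [Real.exp_add, sub_add_eq_sub_sub]
  linear_combination -(u b * v a * G (x - b - a)) *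
    (Real.exp (-a) * Real.exp a * hexp b + hexp a)

end DampedMeasure

/-! ### The scale kernel -/

section ScaleKernel

variable {φ : Measure ℝ} {k : ℝ → ℝ}

theorem PhiFn_nonneg (φ : Measure ℝ) (x : ℝ) : 0 ≤ PhiFn φ x := by
  rw [PhiFn]
  split_ifs
  exacts [integral_nonneg fun y => levyTail_nonneg _ _, le_rfl]

theorem integrableOn_exp_neg_Ioi_zero : IntegrableOn (fun x : ℝ => Real.exp (-x)) (Ioi 0) := by
  simpa using integrableOn_exp_neg_Ioi 0

theorem integrableOn_exp_neg_mul_PhiFn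
    (hφ : ∫⁻ z in Ioi (0 : ℝ), ENNReal.ofReal (min (z ^ 2) z) ∂φ < ⊤) :
    IntegrableOn (fun x => Real.exp (-x) * PhiFn φ x) (Ioi 0) := by
  have h := (isTailWeight_levyTail hφ).integrableOn_integral_Ioi_smul (C := 1)
    integrableOn_exp_neg_Ioi_zero fun a ha => by
      rw [Real.norm_of_nonneg (Real.exp_pos _).le]
      exact Real.exp_le_one_iff.2 (by linarith)
  refine h.congr_fun (fun x hx => ?_) measurableSet_Ioi
  simp only [PhiFn, if_pos (mem_Ioi.1 hx), smul_eq_mul, mul_comm]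

namespace IsScaleKernel

theorem nonneg (hk : IsScaleKernel φ k) {x : ℝ} (hx : 0 < x) : 0 ≤ k (x - 1) :=
  hk.2.1 _ (by linarith)

theorem eq_zero_of_lt (hk : IsScaleKernel φ k) {x : ℝ} (hx : x < -1) : k x = 0 := hk.1 x hx

theorem laplace (hk : IsScaleKernel φ k) {ξ : ℂ} (hξ : 0 < ξ.re) :
    ∫ y in Ioi (0 : ℝ), Complex.exp (-ξ * (y : ℂ)) * (k (y - 1) : ℂ) = ξ / psiFn φ ξ :=
  (hk.2.2.2.2.2 ξ hξ).2

theorem integrableOn_exp_neg_mul (hk : IsScaleKernel φ k) :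
    IntegrableOn (fun x => Real.exp (-x) * k (x - 1)) (Ioi 0) := by
  refine (hk.2.2.2.2.2 1 (by simp)).1.re.congr (ae_of_all _ fun x => ?_)
  have hreal : Complex.exp (-1 * (x : ℂ)) * (k (x - 1) : ℂ)
      = ((Real.exp (-x) * k (x - 1) : ℝ) : ℂ) := by push_cast; simp
  simp only [hreal]
  exact Complex.ofReal_re _

theorem intervalIntegrable (hk : IsScaleKernel φ k) {L : ℝ} (hL : 0 ≤ L) :
    IntervalIntegrable (fun x => k (x - 1)) volume 0 L := by
  have hint : IntervalIntegrable k volume (-1) (L - 1) := by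
    rw [intervalIntegrable_iff_integrableOn_Icc_of_le (by linarith)]
    exact hk.2.2.2.1.integrableOn_compact_subset Icc_subset_Ici_self isCompact_Icc
  simpa using hint.comp_sub_right 1

/-- On the Laplace side: `(ξ / ψ(ξ)) (ψ(ξ) / ξ²) = 1 / ξ`. -/
theorem renewal (hk : IsScaleKernel φ k)
    (hφ : ∫⁻ z in Ioi (0 : ℝ), ENNReal.ofReal (min (z ^ 2) z) ∂φ < ⊤) (hφ₀ : φ (Ioi 0) ≠ 0)
    {G : ℝ → ℝ} {x : ℝ} (hG : IntegrableOn (fun s => G (x - s)) (Ioi 0)) :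
    ∫ b in Ioi 0, k (b - 1) * ∫ a in Ioi 0, PhiFn φ a * G (x - b - a)
      = ∫ s in Ioi 0, G (x - s) := by
  have h := integral_mul_integral_mul_of_laplace (u := fun b => k (b - 1)) (v := PhiFn φ)
    (w := fun _ => 1) (G := G) (x := x) (fun x hx => hk.nonneg hx) (fun x _ => PhiFn_nonneg φ x)
    (fun _ _ => zero_le_one) hk.integrableOn_exp_neg_mul (integrableOn_exp_neg_mul_PhiFn hφ)
    (by simpa using integrableOn_exp_neg_Ioi_zero) (fun ξ hξ => ?_) (by simpa using hG)
  · simpa using h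
  · have hre : 0 < ξ.re := by simp [hξ]
    have h0 : ξ ≠ 0 := fun h => by simp [h] at hre
    have hΦ : ∫ x in Ioi (0 : ℝ), Complex.exp (-ξ * (x : ℂ)) * (PhiFn φ x : ℂ)
        = psiFn φ ξ / ξ ^ 2 := by
      rw [psiFn, mul_div_cancel_left₀ _ (pow_ne_zero 2 h0)]
    have hone : ∫ x in Ioi (0 : ℝ), Complex.exp (-ξ * (x : ℂ)) * ((1 : ℝ) : ℂ) = 1 / ξ := by
      simp only [Complex.ofReal_one, mul_one]
      rw [integral_exp_mul_complex_Ioi (by simpa using hre)]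
      simp
    have hψ := psiFn_ne_zero hφ hφ₀ hre
    rw [hk.laplace hre, hΦ, hone]
    field_simp

end IsScaleKernel

end ScaleKernel

/-! ### Poisson averages of smooth functions -/

section Poisson

theorem poissonWeight_nonneg {t : ℝ} (ht : 0 ≤ t) (j : ℕ) : 0 ≤ poissonWeight t j := by
  unfold poissonWeight; positivity

theorem hasSum_poissonWeight (t : ℝ) : HasSum (poissonWeight t) 1 := by
  have hexp := (NormedSpace.expSeries_div_hasSum_exp (𝔸 := ℝ) t).mul_left (Real.exp (-t))
  rwa [← Real.exp_eq_exp_ℝ, ← Real.exp_add, neg_add_cancel, Real.exp_zero] at hexp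

theorem poissonWeight_le_one {t : ℝ} (ht : 0 ≤ t) (j : ℕ) : poissonWeight t j ≤ 1 :=
  le_hasSum (hasSum_poissonWeight t) j fun i _ => poissonWeight_nonneg ht i

theorem add_one_mul_poissonWeight_succ (t : ℝ) (j : ℕ) :
    (j + 1) * poissonWeight t (j + 1) = t * poissonWeight t j := by
  rw [poissonWeight, poissonWeight, Nat.factorial_succ]
  push_cast
  field_simp
  ring

theorem poissonWeight_succ_le {t : ℝ} (ht : 0 ≤ t) (j : ℕ) : poissonWeight t (j + 1) ≤ t := by
  nlinarith [add_one_mul_poissonWeight_succ t j, poissonWeight_le_one ht j,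
    poissonWeight_nonneg ht (j + 1), j.cast_nonneg (α := ℝ)]

theorem continuous_poissonWeight_div (h : ℝ) (j : ℕ) :
    Continuous fun y : ℝ => poissonWeight (y / h) j := by
  unfold poissonWeight; fun_prop

theorem norm_ite_sub_poissonWeight_le {t : ℝ} (ht : 0 ≤ t) (j : ℕ) :
    ‖(if j = 0 then 1 else 0) - poissonWeight t j‖ ≤ min 1 t := by
  cases j with
  | zero =>
    have hexp : poissonWeight t 0 = Real.exp (-t) := by simp [poissonWeight]
    have hle : Real.exp (-t) ≤ 1 := Real.exp_le_one_iff.2 (by linarith)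
    rw [if_pos rfl, hexp, Real.norm_of_nonneg (by linarith)]
    exact le_min (by linarith [Real.exp_pos (-t)]) (by linarith [Real.add_one_le_exp (-t)])
  | succ j =>
    rw [if_neg j.succ_ne_zero, zero_sub, norm_neg,
      Real.norm_of_nonneg (poissonWeight_nonneg ht _)]
    exact le_min (poissonWeight_le_one ht _) (poissonWeight_succ_le ht _)

theorem min_one_div_le {h y : ℝ} (hy : 0 ≤ y) :
    min 1 (y / h) ≤ max 1 (1 / h) * min 1 y := by
  rw [mul_min_of_nonneg _ _ (by positivity), mul_one, div_eq_mul_one_div, mul_comm y]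
  exact min_le_min (le_max_left _ _) (mul_le_mul_of_nonneg_right (le_max_right _ _) hy)

variable {h y : ℝ}

/-- Stein's identity `E[(X - y) p(X)] = y (E[p(X + h)] - E[p(X)])` for `X = h N`, with `N` Poisson
of mean `y / h`; it generates the central moments of `X` below. -/
theorem hasSum_poissonWeight_mul_sub_mul (hh : 0 < h) {p : ℝ → ℝ} {S T : ℝ}
    (hS : HasSum (fun j : ℕ => poissonWeight (y / h) j * p (j * h + h)) S)
    (hT : HasSum (fun j : ℕ => poissonWeight (y / h) j * p (j * h)) T) :
    HasSum (fun j : ℕ => poissonWeight (y / h) j * ((j * h - y) * p (j * h))) (y * (S - T)) := by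
  have hshift : HasSum (fun j : ℕ => poissonWeight (y / h) j * (j * h * p (j * h))) (y * S) := by
    rw [← hasSum_nat_add_iff' 1]
    simp only [Finset.range_one, Finset.sum_singleton, Nat.cast_zero, zero_mul, mul_zero, sub_zero]
    refine (hS.mul_left y).congr_fun fun j => ?_
    have hrec := add_one_mul_poissonWeight_succ (y / h) j
    field_simp at hrec
    push_cast
    rw [add_one_mul]
    linear_combination p (j * h + h) * hrec
  rw [mul_sub]
  exact (hshift.sub (hT.mul_left y)).congr_fun fun j => by ring

theorem hasSum_poissonWeight_central_one (hh : 0 < h) :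
    HasSum (fun j : ℕ => poissonWeight (y / h) j * (j * h - y)) 0 := by
  have hone := (hasSum_poissonWeight (y / h)).mul_right 1
  simpa using hasSum_poissonWeight_mul_sub_mul hh (p := fun _ => 1) hone hone

theorem hasSum_poissonWeight_central_two (hh : 0 < h) :
    HasSum (fun j : ℕ => poissonWeight (y / h) j * (j * h - y) ^ 2) (h * y) := by
  have hone := hasSum_poissonWeight_central_one (y := y) hh
  have hone' : HasSum (fun j : ℕ => poissonWeight (y / h) j * (j * h + h - y)) (0 + 1 * h) :=
    (hone.add ((hasSum_poissonWeight _).mul_right h)).congr_fun fun j => by ring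
  convert hasSum_poissonWeight_mul_sub_mul hh (p := (· - y)) hone' hone using 1
  · simp only [pow_two]
  · ring

theorem hasSum_poissonWeight_central_three (hh : 0 < h) :
    HasSum (fun j : ℕ => poissonWeight (y / h) j * (j * h - y) ^ 3) (h ^ 2 * y) := by
  have htwo := hasSum_poissonWeight_central_two (y := y) hh
  have htwo' : HasSum (fun j : ℕ => poissonWeight (y / h) j * (j * h + h - y) ^ 2)
      (h * y + 0 * (2 * h) + 1 * h ^ 2) :=
    ((htwo.add ((hasSum_poissonWeight_central_one hh).mul_right (2 * h))).add
      ((hasSum_poissonWeight _).mul_right (h ^ 2))).congr_fun fun j => by ring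
  convert hasSum_poissonWeight_mul_sub_mul hh (p := fun x => (x - y) ^ 2) htwo' htwo using 1
  · simp only [pow_succ' _ 2]
  · ring

theorem hasSum_poissonWeight_central_four (hh : 0 < h) :
    HasSum (fun j : ℕ => poissonWeight (y / h) j * (j * h - y) ^ 4)
      (h ^ 3 * y + 3 * h ^ 2 * y ^ 2) := by
  have hthree := hasSum_poissonWeight_central_three (y := y) hh
  have hthree' : HasSum (fun j : ℕ => poissonWeight (y / h) j * (j * h + h - y) ^ 3)
      (h ^ 2 * y + h * y * (3 * h) + 0 * (3 * h ^ 2) + 1 * h ^ 3) :=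
    (((hthree.add ((hasSum_poissonWeight_central_two hh).mul_right (3 * h))).add
      ((hasSum_poissonWeight_central_one hh).mul_right (3 * h ^ 2))).add
      ((hasSum_poissonWeight _).mul_right (h ^ 3))).congr_fun fun j => by ring
  convert hasSum_poissonWeight_mul_sub_mul hh (p := fun x => (x - y) ^ 3) hthree' hthree using 1
  · simp only [pow_succ' _ 3]
  · ring

theorem abs_sub_sum_iteratedDeriv_le {F : ℝ → ℝ} {n : ℕ} {M : ℝ} (hF : ContDiff ℝ (n + 1) F)
    (hM : ∀ x, |iteratedDeriv (n + 1) F x| ≤ M) (c x : ℝ) :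
    |F x - ∑ i ∈ Finset.range (n + 1), (i.factorial : ℝ)⁻¹ * (x - c) ^ i * iteratedDeriv i F c|
      ≤ M * |x - c| ^ (n + 1) / (n + 1).factorial := by
  rcases eq_or_ne c x with rfl | hcx
  · simp [Finset.sum_range_succ']
  obtain ⟨x', -, hx'⟩ := taylor_mean_remainder_lagrange_iteratedDeriv hcx hF.contDiffOn
  have hpoly : taylorWithinEval F n (uIcc c x) c x = ∑ i ∈ Finset.range (n + 1),
      (i.factorial : ℝ)⁻¹ * (x - c) ^ i * iteratedDeriv i F c := by
    rw [taylor_within_apply]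
    refine Finset.sum_congr rfl fun i hi => ?_
    have hin : ((i : ℕ) : WithTop ℕ∞) ≤ n + 1 := by
      exact_mod_cast (Finset.mem_range.1 hi).le
    rw [smul_eq_mul, iteratedDerivWithin_eq_iteratedDeriv (uniqueDiffOn_uIcc hcx)
      (hF.of_le hin).contDiffAt left_mem_uIcc]
  rw [← hpoly, hx', abs_div, abs_mul, abs_pow, Nat.abs_cast]
  gcongr
  exact hM x'

variable {F : ℝ → ℝ} {M S s : ℝ}

theorem abs_hasSum_poissonWeight_sub_le (hF : ContDiff ℝ 4 F)
    (hM : ∀ i ≤ 4, ∀ x, |iteratedDeriv i F x| ≤ M) (hh : 0 < h) (hy : 0 ≤ y)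
    (hS : HasSum (fun j : ℕ => poissonWeight (y / h) j * F (s - j * h)) S) :
    |S - F (s - y) - h / 2 * (y * iteratedDeriv 2 F (s - y))|
      ≤ M * (h ^ 2 * y / 6 + (h ^ 3 * y + 3 * h ^ 2 * y ^ 2) / 24) := by
  set D := fun i => iteratedDeriv i F (s - y)
  set R := fun j : ℕ => F (s - j * h)
    - (F (s - y) - D 1 * (j * h - y) + D 2 / 2 * (j * h - y) ^ 2 - D 3 / 6 * (j * h - y) ^ 3)
  have hRle (j : ℕ) : |R j| ≤ M * (j * h - y) ^ 4 / 24 := by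
    have htaylor := abs_sub_sum_iteratedDeriv_le (n := 3) (by norm_num; exact hF)
      (hM 4 le_rfl) (s - y) (s - j * h)
    have hsub : s - j * h - (s - y) = -(j * h - y) := by ring
    have heven : |-(j * h - y)| ^ 4 = (j * h - y) ^ 4 := by
      rw [abs_neg]; exact Even.pow_abs (by decide) _
    rw [hsub, heven] at htaylor
    convert htaylor using 2
    · simp [R, D, Finset.sum_range_succ, Nat.factorial]
      ring
    · norm_num [Nat.factorial]
  have hR : HasSum (fun j : ℕ => poissonWeight (y / h) j * R j)
      (S - (1 * F (s - y) - 0 * D 1 + h * y * (D 2 / 2) - h ^ 2 * y * (D 3 / 6))) :=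
    (hS.sub (((((hasSum_poissonWeight _).mul_right (F (s - y))).sub
      ((hasSum_poissonWeight_central_one hh).mul_right (D 1))).add
      ((hasSum_poissonWeight_central_two hh).mul_right (D 2 / 2))).sub
      ((hasSum_poissonWeight_central_three hh).mul_right (D 3 / 6)))).congr_fun
      fun j => by simp only [R]; ring
  have hRsum := hR.norm_le_of_bounded ((hasSum_poissonWeight_central_four hh).mul_left (M / 24))
    fun j => by
      have hw := poissonWeight_nonneg (div_nonneg hy hh.le) j
      rw [norm_mul, Real.norm_of_nonneg hw, Real.norm_eq_abs]
      calc _ ≤ poissonWeight (y / h) j * (M * (j * h - y) ^ 4 / 24) := by gcongr; exact hRle j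
        _ = _ := by ring
  have hD3 : |h ^ 2 * y * (D 3 / 6)| ≤ h ^ 2 * y * (M / 6) := by
    rw [abs_mul, abs_div, abs_of_nonneg (by positivity : 0 ≤ h ^ 2 * y),
      abs_of_pos (by norm_num : (0 : ℝ) < 6)]
    gcongr
    exact hM 3 (by norm_num) _
  calc _ = |(S - (1 * F (s - y) - 0 * D 1 + h * y * (D 2 / 2) - h ^ 2 * y * (D 3 / 6)))
          - h ^ 2 * y * (D 3 / 6)| := by congr 1; ring
    _ ≤ _ := (abs_sub _ _).trans (add_le_add hRsum hD3)
    _ = _ := by ring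

theorem iteratedDeriv_eq_zero_of_forall_le {a : ℝ} (h0 : ∀ x ≤ a, F x = 0) (n : ℕ) {x : ℝ}
    (hx : x < a) : iteratedDeriv n F x = 0 := by
  have hev : F =ᶠ[𝓝 x] fun _ => 0 :=
    (eventually_lt_nhds hx).mono fun z hz => h0 z hz.le
  rw [hev.iteratedDeriv_eq]
  simp

variable {a L : ℝ}

/-- For large `y` Taylor's formula is useless, but the Poisson variable reaches the support of `F`
only if it falls behind its mean by `y / 2`, which the fourth moment controls. -/
theorem abs_hasSum_poissonWeight_le_of_forall_le (hM : ∀ x, |F x| ≤ M) (h0 : ∀ x ≤ a, F x = 0)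
    (hs : s ≤ a + L) (hh : 0 < h) (hh1 : h ≤ 1) (hy : 1 ≤ y) (hLy : 2 * L ≤ y)
    (hS : HasSum (fun j : ℕ => poissonWeight (y / h) j * F (s - j * h)) S) :
    |S| ≤ 64 * M * h ^ 2 := by
  have hM0 : 0 ≤ M := (abs_nonneg _).trans (hM 0)
  have hmarkov (j : ℕ) : |F (s - j * h)| ≤ 16 * M / y ^ 4 * (j * h - y) ^ 4 := by
    rcases le_or_gt (s - j * h) a with hj | hj
    · rw [h0 _ hj, abs_zero]; positivity
    have hpow : (y / 2) ^ 4 ≤ (y - j * h) ^ 4 :=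
      pow_le_pow_left₀ (by positivity) (by linarith) 4
    calc |F (s - j * h)| ≤ M * 1 := by rw [mul_one]; exact hM _
      _ ≤ M * ((y - j * h) ^ 4 / (y / 2) ^ 4) := by
        gcongr; exact (one_le_div (by positivity)).2 hpow
      _ = _ := by field_simp; ring
  have hsum := hS.norm_le_of_bounded
    ((hasSum_poissonWeight_central_four hh).mul_left (16 * M / y ^ 4)) fun j => by
      have hw := poissonWeight_nonneg (by positivity : 0 ≤ y / h) j
      rw [norm_mul, Real.norm_of_nonneg hw, Real.norm_eq_abs]
      calc _ ≤ poissonWeight (y / h) j * (16 * M / y ^ 4 * (j * h - y) ^ 4) := by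
            gcongr; exact hmarkov j
        _ = _ := by ring
  have hmoment : h ^ 3 * y + 3 * h ^ 2 * y ^ 2 ≤ 4 * h ^ 2 * y ^ 4 := by
    have h1 : h ^ 3 * y ≤ h ^ 2 * y ^ 4 :=
      mul_le_mul (pow_le_pow_of_le_one hh.le hh1 (by norm_num)) (le_self_pow₀ hy (by norm_num))
        (by positivity) (by positivity)
    have h2 : h ^ 2 * y ^ 2 ≤ h ^ 2 * y ^ 4 := by gcongr; norm_num
    linarith
  calc |S| ≤ 16 * M / y ^ 4 * (h ^ 3 * y + 3 * h ^ 2 * y ^ 2) := hsum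
    _ ≤ 16 * M / y ^ 4 * (4 * h ^ 2 * y ^ 4) := by gcongr
    _ = 64 * M * h ^ 2 := by field_simp; ring

theorem abs_hasSum_poissonWeight_sub_le_mul_min (hF : ContDiff ℝ 4 F)
    (hM : ∀ i ≤ 4, ∀ x, |iteratedDeriv i F x| ≤ M) (h0 : ∀ x ≤ a, F x = 0) (hL : 0 ≤ L)
    (hs : s ≤ a + L) (hh : 0 < h) (hh1 : h ≤ 1) (hy : 0 < y)
    (hS : HasSum (fun j : ℕ => poissonWeight (y / h) j * F (s - j * h)) S) :
    |S - F (s - y) - h / 2 * (y * iteratedDeriv 2 F (s - y))|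
      ≤ 64 * (L + 1) ^ 2 * M * h ^ 2 * min 1 y := by
  have hM0 : 0 ≤ M := (abs_nonneg _).trans (hM 0 (by norm_num) 0)
  rcases le_or_gt y (2 * (L + 1)) with hyL | hyL
  · have hmin : y ≤ 2 * (L + 1) * min 1 y := by
      rcases min_cases 1 y with ⟨h1, -⟩ | ⟨h1, -⟩ <;> rw [h1] <;> nlinarith
    refine (abs_hasSum_poissonWeight_sub_le hF hM hh hy.le hS).trans ?_
    calc M * (h ^ 2 * y / 6 + (h ^ 3 * y + 3 * h ^ 2 * y ^ 2) / 24)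
        = M * h ^ 2 * y * (4 + h + 3 * y) / 24 := by ring
      _ ≤ M * h ^ 2 * (2 * (L + 1) * min 1 y) * (4 + 1 + 3 * (2 * (L + 1))) / 24 := by gcongr
      _ = M * h ^ 2 * min 1 y * ((L + 1) * (6 * L + 11) / 12) := by ring
      _ ≤ M * h ^ 2 * min 1 y * (64 * (L + 1) ^ 2) := by gcongr; nlinarith
      _ = _ := by ring
  · have hzero : s - y < a := by linarith
    rw [h0 _ hzero.le, iteratedDeriv_eq_zero_of_forall_le h0 2 hzero, mul_zero, mul_zero, sub_zero,
      sub_zero, min_eq_left (by linarith), mul_one]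
    have hfar := abs_hasSum_poissonWeight_le_of_forall_le
      (fun x => by simpa using hM 0 (by norm_num) x) h0 hs hh hh1 (by linarith) (by linarith) hS
    have hone : 1 ≤ (L + 1) ^ 2 := one_le_pow₀ (by linarith)
    calc |S| ≤ 64 * M * h ^ 2 * 1 := by rwa [mul_one]
      _ ≤ 64 * M * h ^ 2 * (L + 1) ^ 2 := by gcongr
      _ = _ := by ring

end Poisson

/-! ### Volterra operators -/

/-- The Volterra operator with kernel `f` truncated to `(0, L]`. On a function vanishing on
`(-∞, a]` the truncation is invisible at the points `x ≤ a + L`. -/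
def volterra (L : ℝ) (f F : ℝ → ℝ) (x : ℝ) : ℝ := ∫ y in (0 : ℝ)..L, f y * F (x - y)

section Volterra

open scoped Convolution

variable {L M a x : ℝ} {f g F G : ℝ → ℝ}

theorem intervalIntegrable_mul_comp_sub (hf : IntervalIntegrable f volume 0 L) (hF : Continuous F)
    (x : ℝ) : IntervalIntegrable (fun y => f y * F (x - y)) volume 0 L :=
  hf.mul_continuousOn (by fun_prop)

theorem volterra_sub (hf : IntervalIntegrable f volume 0 L) (hF : Continuous F)
    (hG : Continuous G) (x : ℝ) :
    volterra L f (fun s => F s - G s) x = volterra L f F x - volterra L f G x := by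
  simp only [volterra, mul_sub]
  exact intervalIntegral.integral_sub (intervalIntegrable_mul_comp_sub hf hF x)
    (intervalIntegrable_mul_comp_sub hf hG x)

theorem volterra_const_mul (c x : ℝ) :
    volterra L f (fun s => c * F s) x = c * volterra L f F x := by
  simp only [volterra, mul_left_comm _ c, intervalIntegral.integral_const_mul]

theorem volterra_sum (hf : IntervalIntegrable f volume 0 L) {ι : Type*} (t : Finset ι)
    {F : ι → ℝ → ℝ} (hF : ∀ i, Continuous (F i)) (x : ℝ) :
    volterra L f (fun s => ∑ i ∈ t, F i s) x = ∑ i ∈ t, volterra L f (F i) x := by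
  simp only [volterra, Finset.mul_sum]
  exact intervalIntegral.integral_finsetSum fun i _ => intervalIntegrable_mul_comp_sub hf (hF i) x

theorem volterra_comp_sub_right (c x : ℝ) :
    volterra L f (fun s => F (s - c)) x = volterra L f F (x - c) := by
  simp only [volterra, sub_right_comm x _ c]

theorem volterra_congr (hL : 0 ≤ L) (hFG : ∀ s ≤ x, F s = G s) :
    volterra L f F x = volterra L f G x := by
  refine intervalIntegral.integral_congr fun y hy => ?_
  rw [uIcc_of_le hL] at hy
  simp only [hFG (x - y) (by linarith [hy.1])]

theorem volterra_eq_zero_of_forall_le (hL : 0 ≤ L) (h0 : ∀ s ≤ x, F s = 0) :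
    volterra L f F x = 0 := by
  rw [volterra_congr (G := 0) hL h0]
  simp [volterra]

theorem abs_volterra_le (hf : IntervalIntegrable f volume 0 L) (hL : 0 ≤ L)
    (hF : ∀ s ≤ x, |F s| ≤ M) : |volterra L f F x| ≤ (∫ y in (0 : ℝ)..L, |f y|) * M := by
  rw [← intervalIntegral.integral_mul_const, ← Real.norm_eq_abs, volterra]
  refine intervalIntegral.norm_integral_le_of_norm_le hL (ae_of_all _ fun y hy => ?_)
    (hf.abs.mul_const M)
  rw [norm_mul, Real.norm_eq_abs, Real.norm_eq_abs]
  exact mul_le_mul_of_nonneg_left (hF _ (by linarith [hy.1])) (abs_nonneg _)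

theorem volterra_eq_convolution (hL : 0 ≤ L) (f F : ℝ → ℝ) (x : ℝ) :
    volterra L f F x
      = ((Ioc 0 L).indicator f ⋆[ContinuousLinearMap.mul ℝ ℝ, volume] F) x := by
  simp only [convolution, ContinuousLinearMap.mul_apply', volterra,
    intervalIntegral.integral_of_le hL, ← integral_indicator measurableSet_Ioc,
    indicator_mul_left]

theorem continuous_volterra (hf : IntervalIntegrable f volume 0 L) (hL : 0 ≤ L)
    (hF : Continuous F) (hM : ∀ x, |F x| ≤ M) : Continuous (volterra L f F) := by
  rw [funext (volterra_eq_convolution hL f F)]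
  refine BddAbove.continuous_convolution_right_of_integrable _ ⟨M, ?_⟩
    ((integrable_indicator_iff measurableSet_Ioc).2 hf.1) hF
  rintro - ⟨x, rfl⟩
  exact hM x

theorem continuous_volterra_volterra (hf : IntervalIntegrable f volume 0 L)
    (hg : IntervalIntegrable g volume 0 L) (hL : 0 ≤ L) (hF : Continuous F)
    (hM : ∀ x, |F x| ≤ M) : Continuous (volterra L f (volterra L g F)) :=
  continuous_volterra hf hL (continuous_volterra hg hL hF hM)
    fun _ => abs_volterra_le hg hL fun s _ => hM s

theorem volterra_eq_integral_Ioi (hL : 0 ≤ L) (h0 : ∀ s < a, F s = 0) (hx : x ≤ a + L) :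
    volterra L f F x = ∫ y in Ioi (0 : ℝ), f y * F (x - y) := by
  rw [volterra, intervalIntegral.integral_of_le hL]
  refine (setIntegral_eq_of_subset_of_forall_sdiff_eq_zero measurableSet_Ioi
    Ioc_subset_Ioi_self fun y hy => ?_).symm
  have hy' : L < y := not_le.1 fun hle => hy.2 ⟨hy.1, hle⟩
  rw [h0 _ (by linarith), mul_zero]

theorem convolution_indicator_Ioc_apply {z : ℝ} (hz0 : 0 ≤ z) (hz : z ≤ L) (f g : ℝ → ℝ) :
    ((Ioc 0 L).indicator f ⋆[ContinuousLinearMap.mul ℝ ℝ, volume] (Ioc 0 L).indicator g) z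
      = ∫ u in (0 : ℝ)..z, g u * f (z - u) := by
  rw [convolution_mul_swap, intervalIntegral.integral_of_le hz0, integral_Ioc_eq_integral_Ioo,
    ← integral_indicator measurableSet_Ioo]
  congr 1 with u
  simp only [indicator_apply, mem_Ioc, mem_Ioo]
  grind

theorem convolution_indicator_Ioc_of_nonpos {z : ℝ} (hz : z ≤ 0) (f g : ℝ → ℝ) :
    ((Ioc 0 L).indicator f ⋆[ContinuousLinearMap.mul ℝ ℝ, volume] (Ioc 0 L).indicator g) z
      = 0 := by
  refine integral_eq_zero_of_ae (ae_of_all _ fun u => ?_)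
  simp only [ContinuousLinearMap.mul_apply', indicator_apply, mem_Ioc, Pi.zero_apply]
  grind

theorem volterra_volterra (hf : IntervalIntegrable f volume 0 L)
    (hg : IntervalIntegrable g volume 0 L) (hF : Continuous F) (hM : ∀ x, |F x| ≤ M)
    (h0 : ∀ s < a, F s = 0) (hax : a ≤ x) (hx : x ≤ a + L) :
    volterra L f (volterra L g F) x
      = ∫ z in (0 : ℝ)..(x - a), (∫ u in (0 : ℝ)..z, g u * f (z - u)) * F (x - z) := by
  have hL : 0 ≤ L := by linarith
  have hf' : Integrable ((Ioc 0 L).indicator f) :=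
    (integrable_indicator_iff measurableSet_Ioc).2 hf.1
  have hg' : Integrable ((Ioc 0 L).indicator g) :=
    (integrable_indicator_iff measurableSet_Ioc).2 hg.1
  have hbdd (x : ℝ) : ConvolutionExistsAt ((Ioc 0 L).indicator g) F x
      (ContinuousLinearMap.mul ℝ ℝ) :=
    hg'.mul_bdd (by fun_prop : Continuous fun y => F (x - y)).aestronglyMeasurable
      (ae_of_all _ fun y => hM _)
  rw [volterra_eq_convolution hL, funext (volterra_eq_convolution hL g F),
    ← convolution_assoc' (ContinuousLinearMap.mul ℝ ℝ) (ContinuousLinearMap.mul ℝ ℝ)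
      (ContinuousLinearMap.mul ℝ ℝ) (ContinuousLinearMap.mul ℝ ℝ) mul_assoc
      (hf'.ae_convolution_exists _ hg') (ae_of_all _ hbdd),
    convolution, intervalIntegral.integral_of_le (by linarith),
    ← integral_indicator measurableSet_Ioc]
  · congr 1 with z
    rw [ContinuousLinearMap.mul_apply']
    by_cases hz : z ∈ Ioc 0 (x - a)
    · rw [indicator_of_mem hz, convolution_indicator_Ioc_apply hz.1.le (by linarith [hz.2])]
    · rw [indicator_of_notMem hz]
      rcases le_or_gt z 0 with hz0 | hz0
      · rw [convolution_indicator_Ioc_of_nonpos hz0, zero_mul]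
      · rw [h0 _ (by grind), mul_zero]
  · refine ((hf'.convolution_integrand (ContinuousLinearMap.mul ℝ ℝ) hg').mul_bdd
      (g := fun p : ℝ × ℝ => F (x - p.1)) (c := M)
      (by fun_prop : Continuous fun p : ℝ × ℝ => F (x - p.1)).aestronglyMeasurable
      (ae_of_all _ fun p => hM _)).congr (ae_of_all _ fun p => ?_)
    simp [Function.uncurry, mul_assoc]

end Volterra

/-! ### The jump generator and its quadrature -/

/-- The generator of the downward jumps with intensity `ν`. For `ν = levyTail φ` it is the operator
of order `ψ - 1`: it multiplies `s ↦ e^{ξ s}` by `ψ(ξ) / ξ`. -/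
def jumpGenerator (ν F : ℝ → ℝ) (s : ℝ) : ℝ := ∫ y in Ioi (0 : ℝ), ν y * (F s - F (s - y))

section JumpGenerator

variable {F ν : ℝ → ℝ} {L M a x y s : ℝ}

theorem abs_sub_comp_sub_le_mul_min (hF : Differentiable ℝ F) (hM : ∀ x, |F x| ≤ M)
    (hM' : ∀ x, |deriv F x| ≤ M) (hy : 0 ≤ y) : |F s - F (s - y)| ≤ 2 * M * min 1 y := by
  have hM0 : 0 ≤ M := (abs_nonneg _).trans (hM 0)
  have hlip : |F s - F (s - y)| ≤ M * |s - (s - y)| :=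
    convex_univ.norm_image_sub_le_of_norm_deriv_le (fun x _ => hF x) (fun x _ => hM' x)
      (mem_univ _) (mem_univ _)
  rw [sub_sub_cancel, abs_of_nonneg hy] at hlip
  rw [mul_min_of_nonneg _ _ (by positivity), mul_one]
  refine le_min ?_ (hlip.trans (by nlinarith))
  linarith [abs_sub (F s) (F (s - y)), hM s, hM (s - y)]

theorem IsTailWeight.integrableOn_mul_sub (hν : IsTailWeight ν) (hF : Differentiable ℝ F)
    (hM : ∀ x, |F x| ≤ M) (hM' : ∀ x, |deriv F x| ≤ M) (s : ℝ) :
    IntegrableOn (fun y => ν y * (F s - F (s - y))) (Ioi 0) := by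
  have hF' := hF.continuous
  exact hν.integrableOn_smul
    (by fun_prop : Continuous fun y => F s - F (s - y)).aestronglyMeasurable
    fun y hy => abs_sub_comp_sub_le_mul_min hF hM hM' hy.le

theorem IsTailWeight.continuous_jumpGenerator (hν : IsTailWeight ν) (hF : Differentiable ℝ F)
    (hM : ∀ x, |F x| ≤ M) (hM' : ∀ x, |deriv F x| ≤ M) : Continuous (jumpGenerator ν F) := by
  have hF' := hF.continuous
  exact continuous_of_dominated
    (fun s => (hν.integrableOn_mul_sub hF hM hM' s).aestronglyMeasurable)
    (fun s => ae_restrict_of_forall_mem measurableSet_Ioi fun y (hy : 0 < y) =>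
      IsTailWeight.norm_smul_le (F := fun y => F s - F (s - y)) hy
        (abs_sub_comp_sub_le_mul_min hF hM hM' hy.le))
    (hν.norm.const_mul (2 * M)) (ae_of_all _ fun y => by fun_prop)

theorem jumpGenerator_eq_zero_of_forall_le (h0 : ∀ x ≤ a, F x = 0) (hs : s ≤ a) :
    jumpGenerator ν F s = 0 :=
  setIntegral_eq_zero_of_forall_eq_zero fun y (hy : 0 < y) => by
    rw [h0 s hs, h0 (s - y) (by linarith), sub_zero, mul_zero]

theorem integral_comp_sub_deriv (hF : ContDiff ℝ 1 F) (x y : ℝ) :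
    ∫ t in (0 : ℝ)..y, deriv F (x - t) = F x - F (x - y) := by
  rw [intervalIntegral.integral_comp_sub_left (deriv F), sub_zero]
  exact intervalIntegral.integral_deriv_eq_sub
    (fun t _ => (hF.differentiable (by norm_num)).differentiableAt)
    ((hF.continuous_deriv le_rfl).intervalIntegrable _ _)

theorem volterra_one_deriv (hF : ContDiff ℝ 1 F) (h0 : ∀ x ≤ a, F x = 0) (hx : x ≤ a + L) :
    volterra L (fun _ => 1) (deriv F) x = F x := by
  simp only [volterra, one_mul]
  rw [integral_comp_sub_deriv hF, h0 (x - L) (by linarith), sub_zero]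

theorem deriv_eq_zero_of_forall_le (h0 : ∀ x ≤ a, F x = 0) (hx : x < a) : deriv F x = 0 := by
  simpa using iteratedDeriv_eq_zero_of_forall_le h0 1 hx

theorem integrableOn_comp_sub_Ioi (hF : Continuous F) (h0 : ∀ x < a, F x = 0) (x : ℝ) :
    IntegrableOn (fun t => F (x - t)) (Ioi 0) :=
  ((by fun_prop : Continuous fun t => F (x - t)).integrableOn_Ioc
    (a := 0) (b := x - a)).of_forall_sdiff_eq_zero measurableSet_Ioi fun _ ht => h0 _ (by grind)

theorem integral_Ioi_comp_sub_deriv (hF : ContDiff ℝ 1 F) (h0 : ∀ x ≤ a, F x = 0) (x : ℝ) :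
    ∫ t in Ioi (0 : ℝ), deriv F (x - t) = F x := by
  have hx : x ≤ a + max 0 (x - a) := by linarith [le_max_right 0 (x - a)]
  rw [← volterra_one_deriv hF h0 hx, volterra_eq_integral_Ioi (le_max_left _ _)
    (fun s hs => deriv_eq_zero_of_forall_le h0 hs) hx]
  simp only [one_mul]

variable {φ : Measure ℝ} {k : ℝ → ℝ} {h : ℝ}

theorem jumpGenerator_levyTail_eq_integral_PhiFn
    (hφ : ∫⁻ z in Ioi (0 : ℝ), ENNReal.ofReal (min (z ^ 2) z) ∂φ < ⊤) (hF : ContDiff ℝ 1 F)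
    (hM' : ∀ x, |deriv F x| ≤ M) (h0 : ∀ x ≤ a, F x = 0) (s : ℝ) :
    jumpGenerator (levyTail φ) F s = ∫ t in Ioi (0 : ℝ), PhiFn φ t * deriv F (s - t) := by
  have hint := integrableOn_comp_sub_Ioi (hF.continuous_deriv le_rfl)
    (fun x hx => deriv_eq_zero_of_forall_le h0 hx) s
  have hfubini := (isTailWeight_levyTail hφ).integral_integral_Ioi_smul hint fun t _ => hM' (s - t)
  simp only [integral_comp_sub_deriv hF, smul_eq_mul] at hfubini
  rw [jumpGenerator, ← hfubini]
  refine setIntegral_congr_fun measurableSet_Ioi fun t (ht : 0 < t) => ?_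
  simp only [PhiFn, if_pos ht]

theorem IsScaleKernel.volterra_jumpGenerator (hk : IsScaleKernel φ k)
    (hφ : ∫⁻ z in Ioi (0 : ℝ), ENNReal.ofReal (min (z ^ 2) z) ∂φ < ⊤) (hφ₀ : φ (Ioi 0) ≠ 0)
    (hF : ContDiff ℝ 1 F) (hM' : ∀ x, |deriv F x| ≤ M) (h0 : ∀ x ≤ a, F x = 0) (hL : 0 ≤ L)
    (hx : x ≤ a + L) :
    volterra L (fun b => k (b - 1)) (jumpGenerator (levyTail φ) F) x = F x := by
  rw [volterra_eq_integral_Ioi hL (fun s hs => jumpGenerator_eq_zero_of_forall_le h0 hs.le) hx]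
  simp only [jumpGenerator_levyTail_eq_integral_PhiFn hφ hF hM' h0]
  rw [hk.renewal hφ hφ₀ (integrableOn_comp_sub_Ioi (hF.continuous_deriv le_rfl)
    (fun x hx => deriv_eq_zero_of_forall_le h0 hx) x), integral_Ioi_comp_sub_deriv hF h0]

theorem IsTailWeight.integrableOn_mul_mul_comp_sub (hν : IsTailWeight ν) (hF : Continuous F)
    (hM : ∀ x, |F x| ≤ M) (h0 : ∀ x < a, F x = 0) (hL : 0 ≤ L) (hs : s ≤ a + L) :
    IntegrableOn (fun y => ν y * (y * F (s - y))) (Ioi 0) := by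
  refine hν.integrableOn_smul (C := (L + 1) * M)
    (by fun_prop : Continuous fun y => y * F (s - y)).aestronglyMeasurable fun y hy => ?_
  have hM0 : 0 ≤ M := (abs_nonneg _).trans (hM 0)
  rcases le_or_gt y L with hyL | hyL
  · have hmin : y ≤ (L + 1) * min 1 y := by
      rcases min_cases 1 y with ⟨h1, -⟩ | ⟨h1, -⟩ <;> rw [h1] <;> nlinarith
    calc ‖y * F (s - y)‖ ≤ ((L + 1) * min 1 y) * M := by
          rw [norm_mul, Real.norm_of_nonneg hy.le]
          gcongr
          exact hM _
      _ = _ := by ring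
  · rw [h0 _ (by linarith), mul_zero, norm_zero]
    positivity

theorem IsTailWeight.intervalIntegrable_id_mul (hν : IsTailWeight ν) (hL : 0 ≤ L) :
    IntervalIntegrable (fun u => u * ν u) volume 0 L := by
  have hmin : IntegrableOn (fun u => ν u * min u L) (Ioi 0) :=
    hν.integrableOn_smul (C := max 1 L)
      (continuous_id.min continuous_const).aestronglyMeasurable fun y hy => by
        rw [Real.norm_of_nonneg (by positivity), mul_min_of_nonneg _ _ (by positivity), mul_one,
          min_comm]
        exact min_le_min (le_max_right _ _) (le_mul_of_one_le_left hy.le (le_max_left _ _))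
  rw [intervalIntegrable_iff_integrableOn_Ioc_of_le hL]
  refine (hmin.mono_set Ioc_subset_Ioi_self).congr_fun (fun u hu => ?_) measurableSet_Ioc
  simp only [min_eq_left hu.2, mul_comm]

theorem integrableOn_levyTail_mul_ite_sub_poissonWeight
    (hφ : ∫⁻ z in Ioi (0 : ℝ), ENNReal.ofReal (min (z ^ 2) z) ∂φ < ⊤) (hh : 0 < h) (j : ℕ) :
    IntegrableOn (fun y => levyTail φ y * ((if j = 0 then 1 else 0) - poissonWeight (y / h) j))
      (Ioi 0) :=
  (isTailWeight_levyTail hφ).integrableOn_smul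
    (continuous_const.sub (continuous_poissonWeight_div h j)).aestronglyMeasurable
    fun _ hy => (norm_ite_sub_poissonWeight_le (by positivity) j).trans (min_one_div_le hy.le)

theorem sum_grunPsiM1_mul_eq_integral
    (hφ : ∫⁻ z in Ioi (0 : ℝ), ENNReal.ofReal (min (z ^ 2) z) ∂φ < ⊤) (hh : 0 < h) (N : ℕ)
    (v : ℕ → ℝ) :
    IntegrableOn (fun y => levyTail φ y *
      (v 0 - ∑ j ∈ Finset.range (N + 1), poissonWeight (y / h) j * v j)) (Ioi 0) ∧
    ∑ j ∈ Finset.range (N + 1), grunPsiM1 φ j h * v j = ∫ y in Ioi (0 : ℝ), levyTail φ y *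
      (v 0 - ∑ j ∈ Finset.range (N + 1), poissonWeight (y / h) j * v j) := by
  have hpoint (y : ℝ) : levyTail φ y *
      (v 0 - ∑ j ∈ Finset.range (N + 1), poissonWeight (y / h) j * v j)
      = ∑ j ∈ Finset.range (N + 1),
        levyTail φ y * ((if j = 0 then 1 else 0) - poissonWeight (y / h) j) * v j := by
    simp only [mul_assoc, ← Finset.mul_sum, sub_mul, Finset.sum_sub_distrib, ite_mul, one_mul,
      zero_mul, Finset.sum_ite_eq', Finset.mem_range, Nat.succ_pos, if_true]
  have hint (j : ℕ) :=
    (integrableOn_levyTail_mul_ite_sub_poissonWeight hφ hh j).mul_const (v j)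
  simp only [hpoint]
  refine ⟨integrable_finsetSum _ fun j _ => hint j, ?_⟩
  rw [integral_finsetSum _ fun j _ => hint j]
  refine Finset.sum_congr rfl fun j _ => ?_
  rw [grunPsiM1_eq_integral hφ j hh, integral_mul_const]

theorem abs_sum_grunPsiM1_mul_sub_le
    (hφ : ∫⁻ z in Ioi (0 : ℝ), ENNReal.ofReal (min (z ^ 2) z) ∂φ < ⊤) (hF : ContDiff ℝ 4 F)
    (hM : ∀ i ≤ 4, ∀ x, |iteratedDeriv i F x| ≤ M) (h0 : ∀ x ≤ a, F x = 0) (hL : 0 ≤ L)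
    (hs : s ≤ a + L) (hh : 0 < h) (hh1 : h ≤ 1) {N : ℕ} (hN : L ≤ N * h) :
    |∑ j ∈ Finset.range (N + 1), grunPsiM1 φ j h * F (s - j * h) - jumpGenerator (levyTail φ) F s
      - h * (-(1 / 2) * volterra L (fun u => u * levyTail φ u) (iteratedDeriv 2 F) s)|
      ≤ 64 * (L + 1) ^ 2 * M * h ^ 2 * ∫ y in Ioi (0 : ℝ), ‖min 1 y * levyTail φ y‖ := by
  have hν := isTailWeight_levyTail hφ
  obtain ⟨hsum, hsum_eq⟩ := sum_grunPsiM1_mul_eq_integral hφ hh N fun j => F (s - j * h)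
  have hgen := hν.integrableOn_mul_sub (hF.differentiable (by norm_num))
    (fun x => by simpa using hM 0 (by norm_num) x)
    (fun x => by simpa using hM 1 (by norm_num) x) s
  have hzero : ∀ x < a, iteratedDeriv 2 F x = 0 := fun x hx =>
    iteratedDeriv_eq_zero_of_forall_le h0 2 hx
  have hcorr := hν.integrableOn_mul_mul_comp_sub
    (hF.continuous_iteratedDeriv 2 (by norm_num)) (hM 2 (by norm_num)) hzero hL hs
  have hcorr_eq : volterra L (fun u => u * levyTail φ u) (iteratedDeriv 2 F) s
      = ∫ y in Ioi (0 : ℝ), levyTail φ y * (y * iteratedDeriv 2 F (s - y)) := by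
    rw [volterra_eq_integral_Ioi hL hzero hs]
    simp only [mul_assoc, mul_left_comm]
  rw [hsum_eq, hcorr_eq, jumpGenerator, ← integral_sub hsum hgen, ← integral_const_mul,
    ← integral_const_mul, ← integral_sub]
  rotate_left
  · exact hsum.sub hgen
  · exact (hcorr.const_mul _).const_mul _
  convert hν.norm_integral_smul_le (F := fun y =>
    -(∑ j ∈ Finset.range (N + 1), poissonWeight (y / h) j * F (s - j * h) - F (s - y)
      - h / 2 * (y * iteratedDeriv 2 F (s - y)))) fun y hy => ?_ using 1
  · rw [Real.norm_eq_abs]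
    congr 2 with y
    simp only [Nat.cast_zero, zero_mul, sub_zero, smul_eq_mul]
    ring
  · rw [norm_neg, Real.norm_eq_abs]
    refine abs_hasSum_poissonWeight_sub_le_mul_min hF hM h0 hL hs hh hh1 hy
      (hasSum_sum_of_ne_finset_zero fun j hj => ?_)
    have hNj : (N : ℝ) ≤ j := by exact_mod_cast (by simpa using hj : N < j).le
    rw [h0 _ (by nlinarith), mul_zero]

end JumpGenerator

/-! ### Primitives and extensions by zero -/

section Extension

variable {F G g : ℝ → ℝ} {a b x : ℝ} {n : ℕ}

theorem contDiff_succ_intervalIntegral (hG : ContDiff ℝ n G) (a : ℝ) :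
    ContDiff ℝ (n + 1) fun x => ∫ t in a..x, G t :=
  contDiff_succ_iff_deriv.2
    ⟨fun x => (hG.continuous.integral_hasStrictDerivAt a x).hasDerivAt.differentiableAt, by simp,
      by rwa [funext (hG.continuous.deriv_integral G a)]⟩

theorem intervalIntegral_eq_zero_of_forall_le (h0 : ∀ x ≤ a, G x = 0) (hx : x ≤ a) :
    ∫ t in a..x, G t = 0 := by
  rw [intervalIntegral.integral_congr (g := 0) fun t ht => h0 t (uIcc_of_ge hx ▸ ht).2]
  simp

theorem exists_contDiff_eqOn_of_iteratedDerivWithin_eq_zero (hab : a < b) :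
    ∀ {n : ℕ} {g : ℝ → ℝ}, ContDiffOn ℝ n g (Icc a b) →
      (∀ j ≤ n, iteratedDerivWithin j g (Icc a b) a = 0) →
      ∃ G, ContDiff ℝ n G ∧ (∀ x ≤ a, G x = 0) ∧ EqOn G g (Icc a b)
  | 0, g, hg, hgj =>
    ⟨IccExtend hab.le ((Icc a b).domRestrict g),
      contDiff_zero.2 hg.continuousOn.domRestrict.Icc_extend',
      fun x hx => (IccExtend_of_le_left hab.le _ hx).trans (hgj 0 le_rfl),
      fun x hx => IccExtend_of_mem hab.le _ hx⟩
  | n + 1, g, hg, hgj => by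
    have hs := uniqueDiffOn_Icc hab
    obtain ⟨G, hG, hG0, hGg⟩ := exists_contDiff_eqOn_of_iteratedDerivWithin_eq_zero hab (n := n)
      (hg.derivWithin hs (by norm_cast))
      fun j hj => by rw [← iteratedDerivWithin_succ', hgj (j + 1) (by lia)]
    refine ⟨_, contDiff_succ_intervalIntegral hG a,
      fun x hx => intervalIntegral_eq_zero_of_forall_le hG0 hx, fun x hx => ?_⟩
    have hsub : Icc a x ⊆ Icc a b := Icc_subset_Icc_right hx.2
    have hg' (t : ℝ) (ht : t ∈ Ioo a x) : HasDerivAt g (G t) t := by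
      have ht' : t ∈ Icc a b := hsub (Ioo_subset_Icc_self ht)
      rw [hGg ht']
      exact (hg.differentiableOn (by norm_num) t ht').hasDerivWithinAt.hasDerivAt
        (Icc_mem_nhds ht.1 (ht.2.trans_le hx.2))
    have hga : g a = 0 := by simpa using hgj 0 (by lia)
    change ∫ t in a..x, G t = g x
    rw [intervalIntegral.integral_eq_sub_of_hasDerivAt_of_le hx.1 (hg.continuousOn.mono hsub) hg'
      (hG.continuous.intervalIntegrable _ _), hga, sub_zero]

theorem exists_forall_abs_iteratedDeriv_le (hF : ContDiff ℝ n F) (hc : HasCompactSupport F) :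
    ∃ M, ∀ i ≤ n, ∀ x, |iteratedDeriv i F x| ≤ M := by
  have hbound (i : ℕ) (hi : i ≤ n) : ∃ C, ∀ x, |iteratedDeriv i F x| ≤ C := by
    have hci : HasCompactSupport (iteratedDeriv i F) := by
      rw [iteratedDeriv_eq_iterate]
      exact i.rec hc fun j hj => by simpa only [Function.iterate_succ_apply'] using hj.deriv
    exact hci.exists_bound_of_continuous (hF.continuous_iteratedDeriv i (by exact_mod_cast hi))
  choose! C hC using hbound
  obtain ⟨M, hM⟩ := ((finite_Iic n).image C).bddAbove
  exact ⟨M, fun i hi x => (hC i hi x).trans (hM (mem_image_of_mem C hi))⟩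

theorem exists_contDiff_deriv_eqOn_of_iteratedDerivWithin_eq_zero (hab : a < b)
    (hg : ContDiffOn ℝ n g (Icc a b))
    (hgj : ∀ j ≤ n, iteratedDerivWithin j g (Icc a b) a = 0) :
    ∃ F, ContDiff ℝ (n + 1) F ∧ HasCompactSupport F ∧ (∀ x ≤ a, F x = 0) ∧
      EqOn (deriv F) g (Icc a b) := by
  obtain ⟨G, hG, hG0, hGg⟩ := exists_contDiff_eqOn_of_iteratedDerivWithin_eq_zero hab hg hgj
  let χ : ContDiffBump a := ⟨b - a + 1, b - a + 2, by linarith, by linarith⟩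
  refine ⟨fun x => χ x * ∫ t in a..x, G t,
    χ.contDiff.mul (contDiff_succ_intervalIntegral hG a), χ.hasCompactSupport.mul_right,
    fun x hx => ?_, fun x hx => ?_⟩
  · simp only [intervalIntegral_eq_zero_of_forall_le hG0 hx, mul_zero]
  · have hball : x ∈ Metric.ball a (b - a + 1) := by
      rw [Metric.mem_ball, Real.dist_eq, abs_lt]
      constructor <;> linarith [hx.1, hx.2]
    have hχ : (fun x => χ x * ∫ t in a..x, G t) =ᶠ[𝓝 x] fun x => ∫ t in a..x, G t := by
      filter_upwards [Metric.isOpen_ball.mem_nhds hball] with y hy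
      rw [χ.one_of_mem_closedBall (Metric.ball_subset_closedBall hy), one_mul]
    rw [hχ.deriv_eq, hG.continuous.deriv_integral G a x, hGg hx]

theorem integral_eq_of_deriv_eqOn (hF : ContDiff ℝ 1 F) (ha : F a = 0) (hax : a ≤ x)
    (hFg : EqOn (deriv F) g (Icc a x)) : ∫ y in a..x, g y = F x := by
  rw [← intervalIntegral.integral_congr fun y hy => hFg (uIcc_of_le hax ▸ hy),
    intervalIntegral.integral_deriv_of_contDiffOn_Icc hF.contDiffOn hax, ha, sub_zero]

theorem iteratedDeriv_two_eqOn_deriv_of_deriv_eqOn (hFg : EqOn (deriv F) g (Icc a b)) :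
    EqOn (iteratedDeriv 2 F) (deriv g) (Ioo a b) := fun x hx => by
  have hnear : deriv F =ᶠ[𝓝 x] g := by
    filter_upwards [Icc_mem_nhds hx.1 hx.2] with y hy using hFg hy
  rw [iteratedDeriv_succ, iteratedDeriv_one, hnear.deriv_eq]

end Extension

/-! ### The quadrature of the Lévy integral -/

section Quadrature

variable {φ : Measure ℝ} {k g F : ℝ → ℝ} {L M a x h : ℝ}

theorem IsScaleKernel.kIter_one_sub_one (hk : IsScaleKernel φ k) {z : ℝ} (hz : 0 ≤ z) :
    kIter k 1 (z - 1) = ∫ u in (0 : ℝ)..z, k (z - u - 1) := by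
  rw [intervalIntegral.integral_comp_sub_left (fun b => k (b - 1)),
    intervalIntegral.integral_comp_sub_right, sub_self, sub_zero, zero_sub,
    intervalIntegral.integral_of_le (by linarith), ← integral_Icc_eq_integral_Ioc]
  exact setIntegral_eq_of_subset_of_forall_sdiff_eq_zero measurableSet_Iic Icc_subset_Iic_self
    fun y hy => hk.eq_zero_of_lt (not_le.1 fun h => hy.2 ⟨h, hy.1⟩)

theorem IsScaleKernel.iplusOp_eq_volterra (hk : IsScaleKernel φ k) (hF : ContDiff ℝ 1 F)
    (hM' : ∀ x, |deriv F x| ≤ M) (h0 : ∀ x ≤ -1, F x = 0) (hL : 0 ≤ L) (hx : x ≤ -1 + L)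
    (hFg : EqOn (deriv F) g (Icc (-1) x)) :
    IplusOp (kIter k 1) g x = volterra L (fun b => k (b - 1)) F x := by
  rcases lt_or_ge x (-1) with hx1 | hx1
  · rw [IplusOp, if_neg hx1.not_ge,
      volterra_eq_zero_of_forall_le hL fun s hs => h0 s (hs.trans hx1.le)]
  calc IplusOp (kIter k 1) g x
      = ∫ z in (0 : ℝ)..(x - -1), kIter k 1 (z - 1) * deriv F (x - z) := by
        rw [IplusOp, if_pos hx1, ← sub_self x, ← intervalIntegral.integral_comp_sub_left
          (fun z => kIter k 1 (z - 1) * deriv F (x - z))]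
        refine intervalIntegral.integral_congr fun y hy => ?_
        rw [uIcc_of_le hx1] at hy
        simp only [sub_sub_cancel, hFg hy]
    _ = ∫ z in (0 : ℝ)..(x - -1), (∫ u in (0 : ℝ)..z, 1 * k (z - u - 1)) * deriv F (x - z) := by
        refine intervalIntegral.integral_congr fun z hz => ?_
        rw [uIcc_of_le (by linarith)] at hz
        simp only [one_mul, hk.kIter_one_sub_one hz.1]
    _ = volterra L (fun b => k (b - 1)) (volterra L (fun _ => 1) (deriv F)) x :=
        (volterra_volterra (hk.intervalIntegrable hL) intervalIntegrable_const
          (hF.continuous_deriv le_rfl) hM' (fun s hs => deriv_eq_zero_of_forall_le h0 hs)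
          hx1 hx).symm
    _ = volterra L (fun b => k (b - 1)) F x :=
        volterra_congr hL fun s hs => volterra_one_deriv hF h0 (hs.trans hx)

theorem IsScaleKernel.Fplus_eq_volterra (hk : IsScaleKernel φ k)
    (hφ : ∫⁻ z in Ioi (0 : ℝ), ENNReal.ofReal (min (z ^ 2) z) ∂φ < ⊤) (hF : ContDiff ℝ 2 F)
    (hM : ∀ x, |iteratedDeriv 2 F x| ≤ M) (h0 : ∀ x ≤ -1, F x = 0) (hx1 : -1 ≤ x)
    (hx : x ≤ -1 + L) (hFg : EqOn (deriv F) g (Icc (-1) x)) :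
    Fplus φ k g x = -(1 / 2) * volterra L (fun b => k (b - 1))
      (volterra L (fun u => u * levyTail φ u) (iteratedDeriv 2 F)) x := by
  have hL : 0 ≤ L := by linarith
  rw [volterra_volterra (hk.intervalIntegrable hL)
    ((isTailWeight_levyTail hφ).intervalIntegrable_id_mul hL) (hF.continuous_iteratedDeriv 2 le_rfl)
    hM (fun s hs => iteratedDeriv_eq_zero_of_forall_le h0 2 hs) hx1 hx, Fplus, sub_neg_eq_add,
    intervalIntegral.integral_of_le (by linarith), intervalIntegral.integral_of_le (by linarith),
    integral_Ioc_eq_integral_Ioo, integral_Ioc_eq_integral_Ioo]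
  congr 1
  refine setIntegral_congr_fun measurableSet_Ioo fun z hz => ?_
  have hxz : x - z ∈ Ioo (-1) x := by grind
  simp only [iteratedDeriv_two_eqOn_deriv_of_deriv_eqOn hFg hxz, mul_comm]

theorem IsScaleKernel.continuousOn_Fplus (hk : IsScaleKernel φ k)
    (hφ : ∫⁻ z in Ioi (0 : ℝ), ENNReal.ofReal (min (z ^ 2) z) ∂φ < ⊤) (hF : ContDiff ℝ 2 F)
    (hM : ∀ x, |iteratedDeriv 2 F x| ≤ M) (h0 : ∀ x ≤ -1, F x = 0) {b : ℝ}
    (hFg : EqOn (deriv F) g (Icc (-1) b)) : ContinuousOn (Fplus φ k g) (Icc (-1) b) := by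
  rcases lt_or_ge b (-1) with hb | hb
  · simp only [Icc_eq_empty hb.not_ge, continuousOn_empty]
  have hL : 0 ≤ b + 1 := by linarith
  refine ((continuous_volterra_volterra (hk.intervalIntegrable hL)
    ((isTailWeight_levyTail hφ).intervalIntegrable_id_mul hL) hL
    (hF.continuous_iteratedDeriv 2 le_rfl) hM).const_mul (-(1 / 2))).continuousOn.congr
    fun x hx => ?_
  exact hk.Fplus_eq_volterra hφ hF hM h0 hx.1 (by linarith [hx.2])
    (hFg.mono (Icc_subset_Icc_right hx.2))

theorem tsum_grunPsiM1_mul_volterra {f : ℝ → ℝ} (hf : IntervalIntegrable f volume 0 L)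
    (hL : 0 ≤ L) (hF : Continuous F) (h0 : ∀ x ≤ a, F x = 0) (hx : x ≤ a + L) (hh : 0 ≤ h)
    {N : ℕ} (hN : L ≤ N * h) (c : ℕ → ℝ) :
    ∑' j : ℕ, c j * volterra L f F (x - j * h)
      = volterra L f (fun s => ∑ j ∈ Finset.range (N + 1), c j * F (s - j * h)) x := by
  rw [volterra_sum hf _ (fun j => by fun_prop), tsum_eq_sum fun j hj => ?_]
  · refine Finset.sum_congr rfl fun j _ => ?_
    rw [volterra_const_mul, volterra_comp_sub_right]
  · have hNj : (N : ℝ) ≤ j := by exact_mod_cast (by simpa using hj : N < j).le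
    rw [volterra_eq_zero_of_forall_le hL fun s hs => h0 s (by nlinarith), mul_zero]

theorem IsScaleKernel.abs_tsum_grunPsiM1_mul_volterra_sub_le (hk : IsScaleKernel φ k)
    (hφ : ∫⁻ z in Ioi (0 : ℝ), ENNReal.ofReal (min (z ^ 2) z) ∂φ < ⊤) (hφ₀ : φ (Ioi 0) ≠ 0)
    (hF : ContDiff ℝ 4 F) (hM : ∀ i ≤ 4, ∀ x, |iteratedDeriv i F x| ≤ M)
    (h0 : ∀ x ≤ a, F x = 0) (hL : 0 ≤ L) (hx : x ≤ a + L) (hh : 0 < h) (hh1 : h ≤ 1) :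
    |∑' j : ℕ, grunPsiM1 φ j h * volterra L (fun b => k (b - 1)) F (x - j * h) - F x
      - h * (-(1 / 2) * volterra L (fun b => k (b - 1))
        (volterra L (fun u => u * levyTail φ u) (iteratedDeriv 2 F)) x)|
      ≤ (∫ b in (0 : ℝ)..L, |k (b - 1)|) *
        (64 * (L + 1) ^ 2 * M * ∫ y in Ioi (0 : ℝ), ‖min 1 y * levyTail φ y‖) * h ^ 2 := by
  obtain ⟨N, hN⟩ := exists_nat_ge (L / h)
  rw [div_le_iff₀ hh] at hN
  have hν := isTailWeight_levyTail hφ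
  have hF0 : ∀ x, |F x| ≤ M := by simpa using hM 0 (by norm_num)
  have hF1 : ∀ x, |deriv F x| ≤ M := by simpa using hM 1 (by norm_num)
  have hFc := hF.continuous
  have hgen : Continuous (jumpGenerator (levyTail φ) F) :=
    hν.continuous_jumpGenerator (hF.differentiable (by norm_num)) hF0 hF1
  have hcorr : Continuous (volterra L (fun u => u * levyTail φ u) (iteratedDeriv 2 F)) :=
    continuous_volterra (hν.intervalIntegrable_id_mul hL) hL
      (hF.continuous_iteratedDeriv 2 (by norm_num)) (hM 2 (by norm_num))
  have hκ := hk.intervalIntegrable hL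
  have hinv := hk.volterra_jumpGenerator hφ hφ₀ (hF.of_le (by norm_num)) hF1 h0 hL hx
  rw [tsum_grunPsiM1_mul_volterra hκ hL hFc h0 hx hh.le hN, ← hinv, ← volterra_const_mul,
    ← volterra_const_mul, ← volterra_sub hκ (by fun_prop) hgen,
    ← volterra_sub hκ (by fun_prop) (by fun_prop)]
  refine (abs_volterra_le hκ hL fun s hs =>
    abs_sum_grunPsiM1_mul_sub_le hφ hF hM h0 hL (hs.trans hx) hh hh1 hN).trans_eq ?_
  ring

theorem IsScaleKernel.abs_tsum_grunPsiM1_mul_iplusOp_sub_le (hk : IsScaleKernel φ k)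
    (hφ : ∫⁻ z in Ioi (0 : ℝ), ENNReal.ofReal (min (z ^ 2) z) ∂φ < ⊤) (hφ₀ : φ (Ioi 0) ≠ 0)
    (hF : ContDiff ℝ 4 F) (hM : ∀ i ≤ 4, ∀ x, |iteratedDeriv i F x| ≤ M)
    (h0 : ∀ x ≤ -1, F x = 0) (hx1 : -1 ≤ x) (hx : x ≤ -1 + L)
    (hFg : EqOn (deriv F) g (Icc (-1) x)) (hh : 0 < h) (hh1 : h ≤ 1) :
    |∑' j : ℕ, grunPsiM1 φ j h * IplusOp (kIter k 1) g (x - j * h) - (∫ y in (-1 : ℝ)..x, g y)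
      - h * Fplus φ k g x| ≤ (∫ b in (0 : ℝ)..L, |k (b - 1)|) *
        (64 * (L + 1) ^ 2 * M * ∫ y in Ioi (0 : ℝ), ‖min 1 y * levyTail φ y‖) * h ^ 2 := by
  have hL : 0 ≤ L := by linarith
  have hF1 := hF.of_le (by norm_num : (1 : WithTop ℕ∞) ≤ 4)
  have hM1 : ∀ x, |deriv F x| ≤ M := by simpa using hM 1 (by norm_num)
  have hIplus (j : ℕ) : IplusOp (kIter k 1) g (x - j * h)
      = volterra L (fun b => k (b - 1)) F (x - j * h) := by
    have hj : x - j * h ≤ x := sub_le_self x (by positivity)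
    exact hk.iplusOp_eq_volterra hF1 hM1 h0 hL (hj.trans hx) (hFg.mono (Icc_subset_Icc_right hj))
  simp only [hIplus, integral_eq_of_deriv_eqOn hF1 (h0 _ le_rfl) hx1 hFg,
    hk.Fplus_eq_volterra hφ (hF.of_le (by norm_num)) (hM 2 (by norm_num)) h0 hx1 hx hFg]
  exact hk.abs_tsum_grunPsiM1_mul_volterra_sub_le hφ hφ₀ hF hM h0 hL hx hh hh1

end Quadrature

theorem psiM1_quadrature_expansion_general (φ : Measure ℝ)
    (hφ : ∫⁻ z in Ioi (0 : ℝ), ENNReal.ofReal (min (z ^ 2) z) ∂φ < ⊤) (hφ₀ : φ (Ioi 0) ≠ 0)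
    (k : ℝ → ℝ) (hk : IsScaleKernel φ k) (g : ℝ → ℝ) (hg : ContDiffOn ℝ 3 g (Icc (-1) 1))
    (hgj : ∀ j ≤ 3, iteratedDerivWithin j g (Icc (-1) 1) (-1) = 0) :
    ContinuousOn (Fplus φ k g) (Icc (-1) 1) ∧
    Fplus φ k g (-1) = 0 ∧
    ∃ C : ℝ, 0 < C ∧ ∀ x ∈ Icc (-1 : ℝ) 1, ∀ h ∈ Ioc (0 : ℝ) 1,
      |(∑' j : ℕ, grunPsiM1 φ j h * IplusOp (kIter k 1) g (x - (j : ℝ) * h)) -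
          (∫ y in (-1 : ℝ)..x, g y) - h * Fplus φ k g x| ≤ C * h ^ 2 := by
  obtain ⟨F, hF, hc, h0, hFg⟩ :=
    exists_contDiff_deriv_eqOn_of_iteratedDerivWithin_eq_zero (by norm_num) (n := 3) hg hgj
  obtain ⟨M, hM⟩ := exists_forall_abs_iteratedDeriv_le (n := 4) hF hc
  have hest (x : ℝ) (hx : x ∈ Icc (-1) 1) (h : ℝ) (hh : h ∈ Ioc 0 1) :=
    hk.abs_tsum_grunPsiM1_mul_iplusOp_sub_le hφ hφ₀ (L := 2) hF hM h0 hx.1 (by linarith [hx.2])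
      (hFg.mono (Icc_subset_Icc_right hx.2)) hh.1 hh.2
  exact ⟨hk.continuousOn_Fplus hφ (hF.of_le (by norm_num)) (hM 2 (by norm_num)) h0 hFg,
    by simp [Fplus], max 1 _, by positivity, fun x hx h hh => (hest x hx h hh).trans
      (mul_le_mul_of_nonneg_right (le_max_right _ _) (sq_nonneg h))⟩

/-- exact first-order expansion of the order `ψ-1` quadrature applied to
the Lévy integral. -/
theorem psiM1_quadrature_expansion (φ : Measure ℝ) (hH0 : H0 φ) (k : ℝ → ℝ)
    (hk : IsScaleKernel φ k) (m : ℕ) (hm : 6 ≤ m) (g : ℝ → ℝ)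
    (hg : ContDiffOn ℝ (m : ℕ∞) g (Icc (-1) 1))
    (hgj : ∀ j : ℕ, j ≤ m → iteratedDerivWithin j g (Icc (-1) 1) (-1) = 0)
    (hg0 : ∀ x : ℝ, x < -1 → g x = 0) :
    ContinuousOn (Fplus φ k g) (Icc (-1) 1) ∧
    Fplus φ k g (-1) = 0 ∧
    ∃ C : ℝ, 0 < C ∧ ∀ x ∈ Icc (-1 : ℝ) 1, ∀ h ∈ Ioc (0 : ℝ) 1,
      |(∑' j : ℕ, grunPsiM1 φ j h * IplusOp (kIter k 1) g (x - (j : ℝ) * h)) -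
          (∫ y in (-1 : ℝ)..x, g y) - h * Fplus φ k g x| ≤ C * h ^ 2 :=
  psiM1_quadrature_expansion_general φ hH0.2.1 hH0.measure_Ioi_zero_ne_zero k hk g
    (hg.of_le (WithTop.coe_le_coe.2 (Nat.cast_le.2 (by lia : 3 ≤ m)))) fun j hj => hgj j (by lia)
end
end
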